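/- arXiv:1108.5568 — 2 statements merged into one kernel-verified Lean document; each statement's English description precedes it below -/
import Mathlib

section
/- Under hypotheses (H0)–(H3), with n₀ ≥ 2 fixed so that c²γ^{n₀} < 1, for every i ∈ {1,…,n₀} one has (1/n) Σ_{l=1}^n Z_{i+l n₀}² → σ² P_μ-almost surely as n → ∞. -/
open MeasureTheory ProbabilityTheory Filter Bornology
open scoped ENNReal NNReal Topology

variable {E : Type*} [MeasurableSpace E] [MetricSpace E] [CompleteSpace E]
  [SecondCountableTopology E] [BorelSpace E]

/-- The Markov operator acting on functions: `Pf(x) = ∫ f(y) π(x, dy)`. -/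
noncomputable def Pfun (π : Kernel E E) (f : E → ℝ) : E → ℝ := fun x => ∫ y, f y ∂(π x)

/-- The Markov operator acting on measures (the transfer operator `ν ↦ νP`). -/
noncomputable def Pmeas (π : Kernel E E) (ν : MeasureTheory.Measure E) :
    MeasureTheory.Measure E := ν.bind (fun x => π x)

/-- `ν ∈ M_{1,1}`: a Borel probability measure with finite first moment. -/
def FiniteFirstMoment (ν : MeasureTheory.Measure E) : Prop :=
  IsProbabilityMeasure ν ∧ ∃ x₀ : E, Integrable (fun x => dist x₀ x) ν

/-- The Wasserstein (dual-Lipschitz) distance between two measures. -/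
noncomputable def wassDist (ν₁ ν₂ : MeasureTheory.Measure E) : ℝ :=
  sSup {r : ℝ | ∃ f : E → ℝ, LipschitzWith 1 f ∧ r = |∫ x, f x ∂ν₁ - ∫ x, f x ∂ν₂|}

/-- The natural filtration of the coordinate process on `ℕ → E`. -/
def natFilt : Filtration ℕ (MeasurableSpace.pi : MeasurableSpace (ℕ → E)) :=
  Filtration.natural (fun k (ω : ℕ → E) => ω k)
    (fun k => (measurable_pi_apply k).stronglyMeasurable)

/-- `ℙ` is the law of the Markov chain on `E^ℕ` with transition probability `π` and
initial distribution `ν`. -/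
structure IsMarkovChainLaw (π : Kernel E E) (ν : MeasureTheory.Measure E)
    (P : MeasureTheory.Measure (ℕ → E)) : Prop where
  prob : IsProbabilityMeasure P
  init : P.map (fun ω => ω 0) = ν
  markov : ∀ (n : ℕ) (g : E → ℝ), Measurable g → IsBounded (Set.range g) →
    P[(fun ω => g (ω (n + 1))) | natFilt n] =ᵐ[P] fun ω => ∫ y, g y ∂(π (ω n))

/-- The corrector function `χ = ∑_{i≥0} Pⁱψ`. -/
noncomputable def chiFun (π : Kernel E E) (ψ : E → ℝ) : E → ℝ :=
  fun x => ∑' i : ℕ, (Pfun π)^[i] ψ x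

/-- The martingale `S_n = χ(X_n) - χ(X_0) + ∑_{i=0}^n ψ(X_i)` as a function of the trajectory. -/
noncomputable def SFun (π : Kernel E E) (ψ : E → ℝ) (n : ℕ) : (ℕ → E) → ℝ :=
  fun ω => chiFun π ψ (ω n) - chiFun π ψ (ω 0) + ∑ i ∈ Finset.range (n + 1), ψ (ω i)

/-- The martingale differences `Z_n = χ(X_n) - χ(X_{n-1}) + ψ(X_n)`. -/
noncomputable def ZFun (π : Kernel E E) (ψ : E → ℝ) (n : ℕ) : (ℕ → E) → ℝ :=
  fun ω => chiFun π ψ (ω n) - chiFun π ψ (ω (n - 1)) + ψ (ω n)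

/-!
The idea is that the chain mixes exponentially fast in the Wasserstein metric. If `H` is a
`K`-Lipschitz function of one transition `ξ_n = (X_n, X_{n+1})` and is centered under the stationary
law, the conditional mean of `H(ξ_{n+1+j})` given the past up to time `n + 1` is `O(K γ^j)` times
the mean distance from `ξ_n` to the stationary law. Hence the covariances decay geometrically, and
`∑_{l < N} H(ξ_{s l})` has second moment `O(K² N)` for all strictly increasing times `s`.

Now `Z_{n+1} = g(ξ_n)` with `g` Lipschitz. Its square is not Lipschitz, but `min (g², T)` is so with
constant `2 √T Lip(g)`, so the truncated sums fluctuate with second moment `O(T N)`, while the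
truncation is visible with probability at most `O(N T^{-p})`, where `2p > 2` is the order of the
bounded moments. A suitable power `T` of `N` makes the probability of a deviation of the average
polynomially small, hence summable along `⌊α^k⌋` for every `α > 1`; the gaps are filled by
monotonicity of the sums of squares.
-/

section Wasserstein

variable {S : Type*} [MeasurableSpace S] [MetricSpace S] {ν ν₁ ν₂ : Measure S} {f : S → ℝ}
  {K : ℝ≥0}

namespace FiniteFirstMoment

theorem dirac [MeasurableSingletonClass S] (x : S) : FiniteFirstMoment (Measure.dirac x) :=
  ⟨inferInstance, x, integrable_dirac (by simp)⟩

variable [OpensMeasurableSpace S]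

theorem integrable_of_lipschitz (hν : FiniteFirstMoment ν) (hf : LipschitzWith K f) :
    Integrable f ν := by
  obtain ⟨_, x₀, hx₀⟩ := hν
  refine ((integrable_const |f x₀|).add (hx₀.const_mul K)).mono'
    hf.continuous.aestronglyMeasurable (ae_of_all _ fun x => ?_)
  have hdist : |f x - f x₀| ≤ K * dist x₀ x := by
    simpa only [Real.dist_eq, dist_comm x] using hf.dist_le_mul x x₀
  calc ‖f x‖ = |f x₀ + (f x - f x₀)| := by rw [add_sub_cancel, Real.norm_eq_abs]
    _ ≤ |f x₀| + K * dist x₀ x := (abs_add_le _ _).trans (by gcongr)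

theorem integrable_dist (hν : FiniteFirstMoment ν) (x : S) : Integrable (fun y => dist x y) ν :=
  hν.integrable_of_lipschitz (LipschitzWith.dist_right x)

theorem abs_apply_sub_integral_le (hν : FiniteFirstMoment ν) (hf : LipschitzWith K f) (x : S) :
    |f x - ∫ y, f y ∂ν| ≤ K * ∫ y, dist x y ∂ν := by
  have := hν.1
  calc |f x - ∫ y, f y ∂ν| = |∫ y, (f x - f y) ∂ν| := by
        rw [integral_sub (integrable_const _) (hν.integrable_of_lipschitz hf), integral_const,
          probReal_univ, one_smul]
    _ ≤ ∫ y, |f x - f y| ∂ν := abs_integral_le_integral_abs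
    _ ≤ ∫ y, K * dist x y ∂ν :=
        integral_mono ((integrable_const _).sub (hν.integrable_of_lipschitz hf)).abs
          ((hν.integrable_dist x).const_mul _) fun y => hf.dist_le_mul x y
    _ = K * ∫ y, dist x y ∂ν := integral_const_mul _ _

theorem bddAbove_wassDist (hν₁ : FiniteFirstMoment ν₁) (hν₂ : FiniteFirstMoment ν₂) :
    BddAbove {r : ℝ | ∃ f : S → ℝ, LipschitzWith 1 f ∧ r = |∫ x, f x ∂ν₁ - ∫ x, f x ∂ν₂|} := by
  obtain ⟨x₀, -⟩ := hν₁.2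
  refine ⟨(∫ x, dist x₀ x ∂ν₁) + ∫ x, dist x₀ x ∂ν₂, ?_⟩
  rintro _ ⟨f, hf, rfl⟩
  have h₁ := hν₁.abs_apply_sub_integral_le hf x₀
  have h₂ := hν₂.abs_apply_sub_integral_le hf x₀
  rw [NNReal.coe_one, one_mul] at h₁ h₂
  exact (abs_sub_le _ (f x₀) _).trans (add_le_add (abs_sub_comm (f x₀) _ ▸ h₁) h₂)

theorem abs_integral_sub_integral_le (hν₁ : FiniteFirstMoment ν₁) (hν₂ : FiniteFirstMoment ν₂)
    (hf : LipschitzWith K f) :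
    |∫ x, f x ∂ν₁ - ∫ x, f x ∂ν₂| ≤ K * wassDist ν₁ ν₂ := by
  rcases eq_or_ne K 0 with rfl | hK
  · obtain ⟨x₀, -⟩ := hν₁.2
    have := hν₁.1
    have := hν₂.1
    have hconst : f = fun _ => f x₀ :=
      funext fun x => dist_le_zero.1 (by simpa using hf.dist_le_mul x x₀)
    rw [hconst]
    simp
  · have hK' : (0 : ℝ) < K := by positivity
    have hscaled : LipschitzWith 1 fun x => (K : ℝ)⁻¹ * f x := by
      refine LipschitzWith.of_dist_le_mul fun x y => ?_
      rw [Real.dist_eq, ← mul_sub, abs_mul, abs_of_pos (inv_pos.2 hK'), NNReal.coe_one, one_mul,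
        inv_mul_le_iff₀ hK']
      exact hf.dist_le_mul x y
    have hle := le_csSup (hν₁.bddAbove_wassDist hν₂) ⟨_, hscaled, rfl⟩
    rwa [integral_const_mul, integral_const_mul, ← mul_sub, abs_mul, abs_of_pos (inv_pos.2 hK'),
      inv_mul_le_iff₀ hK'] at hle

theorem wassDist_dirac_le (hν : FiniteFirstMoment ν) (x : S) :
    wassDist (Measure.dirac x) ν ≤ ∫ y, dist x y ∂ν := by
  refine Real.sSup_le ?_ (integral_nonneg fun _ => dist_nonneg)
  rintro _ ⟨f, hf, rfl⟩
  rw [integral_dirac]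
  simpa only [NNReal.coe_one, one_mul] using hν.abs_apply_sub_integral_le hf x

end FiniteFirstMoment

theorem wassDist_nonneg (ν₁ ν₂ : Measure S) : 0 ≤ wassDist ν₁ ν₂ := by
  refine Real.sSup_nonneg ?_
  rintro _ ⟨f, -, rfl⟩
  exact abs_nonneg _

end Wasserstein

section MarkovOperator

variable {S : Type*} [MeasurableSpace S] {π : Kernel S S} {ν : Measure S}

theorem Pmeas_dirac (π : Kernel S S) (x : S) : Pmeas π (Measure.dirac x) = π x :=
  Measure.dirac_bind π.measurable x

theorem integral_Pmeas {f : S → ℝ} (hf : Integrable f (Pmeas π ν)) :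
    ∫ x, f x ∂Pmeas π ν = ∫ x, Pfun π f x ∂ν := by
  have hcomp : Pmeas π ν = (π ∘ₖ Kernel.const Unit ν) () := by
    rw [Kernel.comp_apply, Kernel.const_apply, Pmeas]
  rw [hcomp] at hf ⊢
  exact Kernel.integral_comp hf

theorem measurable_Pfun [IsSFiniteKernel π] {f : S → ℝ} (hf : Measurable f) :
    Measurable (Pfun π f) :=
  hf.stronglyMeasurable.integral_kernel.measurable

end MarkovOperator

section SpectralGap

variable {S : Type*} [MeasurableSpace S] [MetricSpace S] {π : Kernel S S} {C γ K : ℝ≥0}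
  {ν ν₁ ν₂ : Measure S} {f : S → ℝ}

/-- The transition kernel `π` has a spectral gap in the Wasserstein metric: it preserves `M_{1,1}`
and `d(ν₁Pⁿ, ν₂Pⁿ) ≤ C γⁿ d(ν₁, ν₂)` with `γ < 1`. The bound is required for every `n`,
including `n = 0`. -/
structure HasWassersteinGap (π : Kernel S S) (C γ : ℝ≥0) : Prop where
  lt_one : γ < 1
  finiteFirstMoment ⦃ν : Measure S⦄ : FiniteFirstMoment ν → FiniteFirstMoment (Pmeas π ν)
  wassDist_le ⦃ν₁ ν₂ : Measure S⦄ : FiniteFirstMoment ν₁ → FiniteFirstMoment ν₂ → ∀ n : ℕ,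
    wassDist ((Pmeas π)^[n] ν₁) ((Pmeas π)^[n] ν₂) ≤ C * γ ^ n * wassDist ν₁ ν₂

namespace HasWassersteinGap

theorem of_pos {c γ : ℝ} (hγ : γ ∈ Set.Ioo (0 : ℝ) 1) (hc : 0 < c)
    (hpres : ∀ ν : Measure S, FiniteFirstMoment ν → FiniteFirstMoment (Pmeas π ν))
    (hgap : ∀ n : ℕ, 1 ≤ n → ∀ ν₁ ν₂ : Measure S, FiniteFirstMoment ν₁ → FiniteFirstMoment ν₂ →
      wassDist ((Pmeas π)^[n] ν₁) ((Pmeas π)^[n] ν₂) ≤ c * γ ^ n * wassDist ν₁ ν₂) :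
    HasWassersteinGap π (c + 1).toNNReal γ.toNNReal where
  lt_one := Real.toNNReal_lt_one.2 hγ.2
  finiteFirstMoment := hpres
  wassDist_le ν₁ ν₂ h₁ h₂ n := by
    have hγ₀ := hγ.1.le
    rw [Real.coe_toNNReal _ hγ₀, Real.coe_toNNReal _ (by positivity)]
    have hd := wassDist_nonneg ν₁ ν₂
    rcases n.eq_zero_or_pos with rfl | hn
    · simp only [Function.iterate_zero, id_eq, pow_zero, mul_one]
      exact le_mul_of_one_le_left hd (by linarith)
    · refine (hgap n hn ν₁ ν₂ h₁ h₂).trans ?_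
      gcongr
      linarith

theorem finiteFirstMoment_iterate (hπ : HasWassersteinGap π C γ) (hν : FiniteFirstMoment ν)
    (n : ℕ) : FiniteFirstMoment ((Pmeas π)^[n] ν) := by
  induction n with
  | zero => exact hν
  | succ n ih => exact Function.iterate_succ_apply' (Pmeas π) n ν ▸ hπ.finiteFirstMoment ih

theorem finiteFirstMoment_apply [MeasurableSingletonClass S] (hπ : HasWassersteinGap π C γ)
    (x : S) : FiniteFirstMoment (π x) :=
  Pmeas_dirac π x ▸ hπ.finiteFirstMoment (FiniteFirstMoment.dirac x)

variable [OpensMeasurableSpace S]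

theorem lipschitzWith_integral_iterate_Pmeas_dirac (hπ : HasWassersteinGap π C γ)
    (hf : LipschitzWith K f) (n : ℕ) :
    LipschitzWith (K * (C * γ ^ n)) fun x => ∫ y, f y ∂(Pmeas π)^[n] (Measure.dirac x) := by
  refine LipschitzWith.of_dist_le_mul fun x y => ?_
  have hx := FiniteFirstMoment.dirac x
  have hy := FiniteFirstMoment.dirac y
  calc dist (∫ z, f z ∂(Pmeas π)^[n] (Measure.dirac x)) (∫ z, f z ∂(Pmeas π)^[n] (Measure.dirac y))
      ≤ K * wassDist ((Pmeas π)^[n] (Measure.dirac x)) ((Pmeas π)^[n] (Measure.dirac y)) :=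
        (hπ.finiteFirstMoment_iterate hx n).abs_integral_sub_integral_le
          (hπ.finiteFirstMoment_iterate hy n) hf
    _ ≤ K * (C * γ ^ n * ∫ z, dist x z ∂Measure.dirac y) := by
        gcongr
        exact (hπ.wassDist_le hx hy n).trans (by gcongr; exact hy.wassDist_dirac_le x)
    _ = ↑(K * (C * γ ^ n)) * dist x y := by
        rw [integral_dirac]
        push_cast
        ring

theorem exists_lipschitzWith_iterate_Pfun (hπ : HasWassersteinGap π C γ)
    (hf : LipschitzWith K f) (n : ℕ) : ∃ K', LipschitzWith K' ((Pfun π)^[n] f) := by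
  induction n with
  | zero => exact ⟨K, hf⟩
  | succ n ih =>
    obtain ⟨K', hK'⟩ := ih
    refine ⟨K' * (C * γ ^ 1), ?_⟩
    rw [Function.iterate_succ_apply']
    have hlip := hπ.lipschitzWith_integral_iterate_Pmeas_dirac hK' 1
    simp only [Function.iterate_one, Pmeas_dirac] at hlip
    exact hlip

theorem integral_iterate_Pmeas (hπ : HasWassersteinGap π C γ) (hf : LipschitzWith K f)
    (hν : FiniteFirstMoment ν) (n : ℕ) :
    ∫ x, f x ∂(Pmeas π)^[n] ν = ∫ x, (Pfun π)^[n] f x ∂ν := by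
  induction n generalizing ν with
  | zero => rfl
  | succ n ih =>
    obtain ⟨K', hK'⟩ := hπ.exists_lipschitzWith_iterate_Pfun hf n
    have hν' := hπ.finiteFirstMoment hν
    rw [Function.iterate_succ_apply, Function.iterate_succ_apply', ih hν',
      integral_Pmeas (hν'.integrable_of_lipschitz hK')]

theorem integral_iterate_Pmeas_dirac (hπ : HasWassersteinGap π C γ) (hf : LipschitzWith K f)
    (n : ℕ) (x : S) : ∫ y, f y ∂(Pmeas π)^[n] (Measure.dirac x) = (Pfun π)^[n] f x := by
  rw [hπ.integral_iterate_Pmeas hf (FiniteFirstMoment.dirac x), integral_dirac]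

theorem lipschitzWith_iterate_Pfun (hπ : HasWassersteinGap π C γ) (hf : LipschitzWith K f)
    (n : ℕ) : LipschitzWith (K * (C * γ ^ n)) ((Pfun π)^[n] f) := by
  simpa only [hπ.integral_iterate_Pmeas_dirac hf] using
    hπ.lipschitzWith_integral_iterate_Pmeas_dirac hf n

theorem abs_iterate_Pfun_sub_integral_le (hπ : HasWassersteinGap π C γ) (hf : LipschitzWith K f)
    (hν : FiniteFirstMoment ν) (hinv : Pmeas π ν = ν) (n : ℕ) (x : S) :
    |(Pfun π)^[n] f x - ∫ y, f y ∂ν| ≤ K * (C * γ ^ n) * ∫ y, dist x y ∂ν := by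
  have hmean : ∫ y, f y ∂ν = ∫ y, (Pfun π)^[n] f y ∂ν := by
    rw [← hπ.integral_iterate_Pmeas hf hν, Function.iterate_fixed hinv]
  rw [hmean]
  exact_mod_cast hν.abs_apply_sub_integral_le (hπ.lipschitzWith_iterate_Pfun hf n) x

theorem lipschitzWith_chiFun (hπ : HasWassersteinGap π C γ) (hf : LipschitzWith K f)
    (hν : FiniteFirstMoment ν) (hinv : Pmeas π ν = ν) (hf₀ : ∫ x, f x ∂ν = 0) :
    LipschitzWith (K * C * (1 - γ)⁻¹) (chiFun π f) := by
  have hgeom : HasSum (fun n : ℕ => (γ : ℝ) ^ n) (1 - γ)⁻¹ :=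
    hasSum_geometric_of_lt_one γ.2 hπ.lt_one
  have hsummable (x : S) : Summable fun n => (Pfun π)^[n] f x := by
    refine Summable.of_norm_bounded (hgeom.summable.mul_left (K * C * ∫ y, dist x y ∂ν)) fun n => ?_
    have := hπ.abs_iterate_Pfun_sub_integral_le hf hν hinv n x
    rw [hf₀, sub_zero] at this
    exact this.trans_eq (by ring)
  refine LipschitzWith.of_dist_le_mul fun x y => ?_
  have hterm (n : ℕ) :
      ‖(Pfun π)^[n] f x - (Pfun π)^[n] f y‖ ≤ K * C * dist x y * (γ : ℝ) ^ n :=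
    ((hπ.lipschitzWith_iterate_Pfun hf n).dist_le_mul x y).trans_eq (by push_cast; ring)
  rw [Real.dist_eq, chiFun, chiFun, ← (hsummable x).tsum_sub (hsummable y)]
  refine (tsum_of_norm_bounded (hgeom.mul_left _) hterm).trans_eq ?_
  rw [NNReal.coe_mul, NNReal.coe_mul, NNReal.coe_inv, NNReal.coe_sub hπ.lt_one.le, NNReal.coe_one]
  ring

end HasWassersteinGap

end SpectralGap

section MarkovProperty

variable {S : Type*} [MeasurableSpace S]

/-- The transition `(X_n, X_{n+1})` of the coordinate process. -/
def transition (n : ℕ) (ω : ℕ → S) : S × S := (ω n, ω (n + 1))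

theorem measurable_transition (n : ℕ) : Measurable (transition (S := S) n) :=
  (measurable_pi_apply n).prodMk (measurable_pi_apply (n + 1))

/-- The conditional expectation of `f(X₀, X₁)` given `X₀ = x` for a chain with kernel `π`. -/
noncomputable def transitionMean (π : Kernel S S) (f : S × S → ℝ) (x : S) : ℝ :=
  ∫ y, f (x, y) ∂π x

theorem measurable_transitionMean {π : Kernel S S} [IsSFiniteKernel π] {f : S × S → ℝ}
    (hf : Measurable f) : Measurable (transitionMean π f) :=
  hf.stronglyMeasurable.integral_kernel_prod_right'.measurable

variable [MetricSpace S] [SecondCountableTopology S] [BorelSpace S]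

theorem measurable_natFilt_apply {k n : ℕ} (hkn : k ≤ n) :
    Measurable[natFilt (E := S) n] fun ω => ω k :=
  ((Filtration.stronglyAdapted_natural
    fun k => (measurable_pi_apply k).stronglyMeasurable) k).measurable.mono
      (natFilt.mono hkn) le_rfl

variable {π : Kernel S S} [IsMarkovKernel π] {ν : Measure S} {P : Measure (ℕ → S)}

namespace IsMarkovChainLaw

theorem measure_inter_preimage (hP : IsMarkovChainLaw π ν P) {n : ℕ} {A : Set (ℕ → S)}
    (hA : MeasurableSet[natFilt n] A) {B : Set S} (hB : MeasurableSet B) :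
    P (A ∩ {ω | ω (n + 1) ∈ B}) = ∫⁻ ω in A, π (ω n) B ∂P := by
  have := hP.prob
  set B' : Set (ℕ → S) := {ω | ω (n + 1) ∈ B}
  have hB' : MeasurableSet B' := measurable_pi_apply (n + 1) hB
  have hker : Measurable fun ω : ℕ → S => π (ω n) B :=
    (π.measurable_coe hB).comp (measurable_pi_apply n)
  have hbdd : IsBounded (Set.range (B.indicator (1 : S → ℝ))) :=
    (Set.toFinite {0, 1}).isBounded.subset
      (Set.range_subset_iff.2 (Set.indicator_eq_zero_or_self B 1))
  have hcond := hP.markov n (B.indicator 1) (measurable_one.indicator hB) hbdd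
  have hreal : P.real (A ∩ B') = (∫⁻ ω in A, π (ω n) B ∂P).toReal :=
    calc P.real (A ∩ B') = ∫ ω in A, B'.indicator 1 ω ∂P := by
          rw [integral_indicator_one hB', measureReal_restrict_apply hB', Set.inter_comm]
      _ = ∫ ω in A, (P[B'.indicator 1 | natFilt n]) ω ∂P :=
          (setIntegral_condExp (natFilt.le n) ((integrable_const 1).indicator hB') hA).symm
      _ = ∫ ω in A, ∫ y, B.indicator 1 y ∂π (ω n) ∂P :=
          setIntegral_congr_ae (natFilt.le n _ hA) (hcond.mono fun ω h _ => h)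
      _ = ∫ ω in A, (π (ω n) B).toReal ∂P := by
          simp only [integral_indicator_one hB, measureReal_def]
      _ = (∫⁻ ω in A, π (ω n) B ∂P).toReal :=
          integral_toReal hker.aemeasurable (ae_of_all _ fun ω => measure_lt_top _ _)
  have hfin : ∫⁻ ω in A, π (ω n) B ∂P ≠ ∞ :=
    ((lintegral_mono fun ω => prob_le_one).trans_lt
      (by simpa only [lintegral_one] using measure_lt_top _ _)).ne
  exact (ENNReal.toReal_eq_toReal_iff' (measure_ne_top _ _) hfin).1 hreal

theorem map_transition_restrict (hP : IsMarkovChainLaw π ν P) {n : ℕ} {A : Set (ℕ → S)}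
    (hA : MeasurableSet[natFilt n] A) :
    (P.restrict A).map (transition n) = (P.restrict A).map (fun ω => ω n) ⊗ₘ π := by
  have := hP.prob
  refine Measure.ext_prod fun {s t} hs ht => ?_
  have hs' : MeasurableSet[natFilt n] {ω : ℕ → S | ω n ∈ s} := measurable_natFilt_apply le_rfl hs
  have hpre : transition n ⁻¹' s ×ˢ t ∩ A = ({ω | ω n ∈ s} ∩ A) ∩ {ω : ℕ → S | ω (n + 1) ∈ t} := by
    ext ω
    simp only [transition, Set.mem_inter_iff, Set.mem_preimage, Set.mem_prod, Set.mem_ofPred_eq]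
    tauto
  rw [Measure.map_apply (measurable_transition n) (hs.prod ht),
    Measure.restrict_apply (measurable_transition n (hs.prod ht)), hpre,
    hP.measure_inter_preimage (hs'.inter hA) ht, Measure.compProd_apply_prod hs ht,
    setLIntegral_map hs (π.measurable_coe ht) (measurable_pi_apply n), ←
    Measure.restrict_restrict (natFilt.le n _ hs')]
  rfl

theorem condExp_transition (hP : IsMarkovChainLaw π ν P) {f : S × S → ℝ} (hf : Measurable f)
    {n : ℕ} (hint : Integrable (fun ω => f (transition n ω)) P) :
    P[fun ω => f (transition n ω) | natFilt n] =ᵐ[P] fun ω => transitionMean π f (ω n) := by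
  have := hP.prob
  have hlaw {A : Set (ℕ → S)} (hA : MeasurableSet[natFilt n] A) :
      Integrable f ((P.restrict A).map (fun ω => ω n) ⊗ₘ π) := by
    rw [← hP.map_transition_restrict hA]
    exact (integrable_map_measure hf.aestronglyMeasurable
      (measurable_transition n).aemeasurable).2 hint.restrict
  have hmean : Measurable (transitionMean π f) := measurable_transitionMean hf
  refine (ae_eq_condExp_of_forall_setIntegral_eq (natFilt.le n) hint (fun A hA _ => ?_)
    (fun A hA _ => ?_)
    (hmean.comp (measurable_natFilt_apply le_rfl)).stronglyMeasurable.aestronglyMeasurable).symm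
  · exact (integrable_map_measure hmean.aestronglyMeasurable
      (measurable_pi_apply n).aemeasurable).1 (hlaw hA).integral_compProd
  · calc ∫ ω in A, transitionMean π f (ω n) ∂P
        = ∫ x, transitionMean π f x ∂(P.restrict A).map (fun ω => ω n) :=
          (integral_map (measurable_pi_apply n).aemeasurable hmean.aestronglyMeasurable).symm
      _ = ∫ p, f p ∂(P.restrict A).map (transition n) := by
          rw [hP.map_transition_restrict hA, Measure.integral_compProd (hlaw hA)]
          rfl
      _ = ∫ ω in A, f (transition n ω) ∂P :=
          integral_map (measurable_transition n).aemeasurable hf.aestronglyMeasurable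

theorem condExp_apply_add (hP : IsMarkovChainLaw π ν P) {h : S → ℝ} (hh : Measurable h)
    {n j : ℕ} (hint : Integrable (fun ω => h (ω (n + j))) P) :
    P[fun ω => h (ω (n + j)) | natFilt n] =ᵐ[P] fun ω => (Pfun π)^[j] h (ω n) := by
  have := hP.prob
  have hmeas (j : ℕ) : Measurable ((Pfun π)^[j] h) := by
    induction j with
    | zero => exact hh
    | succ j ih => exact Function.iterate_succ_apply' (Pfun π) j h ▸ measurable_Pfun ih
  induction j generalizing n with
  | zero =>
    exact .of_eq (condExp_of_stronglyMeasurable (natFilt.le n)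
      (hh.comp (measurable_natFilt_apply le_rfl)).stronglyMeasurable hint)
  | succ j ih =>
    rw [show n + (j + 1) = n + 1 + j by ring] at hint ⊢
    have hnext := ih hint
    calc P[fun ω => h (ω (n + 1 + j)) | natFilt n]
        =ᵐ[P] P[P[fun ω => h (ω (n + 1 + j)) | natFilt (n + 1)] | natFilt n] :=
          (condExp_condExp_of_le (natFilt.mono n.le_succ) (natFilt.le _)).symm
      _ =ᵐ[P] P[fun ω => (Pfun π)^[j] h (ω (n + 1)) | natFilt n] := condExp_congr_ae hnext
      _ =ᵐ[P] fun ω => transitionMean π (fun p => (Pfun π)^[j] h p.2) (ω n) :=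
          hP.condExp_transition ((hmeas j).comp measurable_snd) (integrable_condExp.congr hnext)
      _ = fun ω => (Pfun π)^[j + 1] h (ω n) := by
          rw [Function.iterate_succ_apply']
          rfl

theorem condExp_transition_add (hP : IsMarkovChainLaw π ν P) {f : S × S → ℝ} (hf : Measurable f)
    {n j : ℕ} (hint : Integrable (fun ω => f (transition (n + j) ω)) P) :
    P[fun ω => f (transition (n + j) ω) | natFilt n] =ᵐ[P]
      fun ω => (Pfun π)^[j] (transitionMean π f) (ω n) := by
  have := hP.prob
  have hnext := hP.condExp_transition hf hint
  calc P[fun ω => f (transition (n + j) ω) | natFilt n]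
      =ᵐ[P] P[P[fun ω => f (transition (n + j) ω) | natFilt (n + j)] | natFilt n] :=
        (condExp_condExp_of_le (natFilt.mono (n.le_add_right j)) (natFilt.le _)).symm
    _ =ᵐ[P] P[fun ω => transitionMean π f (ω (n + j)) | natFilt n] := condExp_congr_ae hnext
    _ =ᵐ[P] fun ω => (Pfun π)^[j] (transitionMean π f) (ω n) :=
        hP.condExp_apply_add (measurable_transitionMean hf) (integrable_condExp.congr hnext)

end IsMarkovChainLaw

end MarkovProperty

theorem integral_sq_sum_range_le {Ω : Type*} [MeasurableSpace Ω] {P : Measure Ω} {Φ : ℕ → Ω → ℝ}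
    {A B r : ℝ} (hΦ : ∀ l, MemLp (Φ l) 2 P) (hr₀ : 0 ≤ r) (hr₁ : r < 1) (hB : 0 ≤ B)
    (hdiag : ∀ l, ∫ ω, Φ l ω ^ 2 ∂P ≤ A)
    (hcov : ∀ l j, ∫ ω, Φ l ω * Φ (l + 1 + j) ω ∂P ≤ B * r ^ j) (N : ℕ) :
    ∫ ω, (∑ l ∈ Finset.range N, Φ l ω) ^ 2 ∂P ≤ (A + 2 * B / (1 - r)) * N := by
  induction N with
  | zero => simp
  | succ N ih =>
    have hsum : MemLp (fun ω => ∑ l ∈ Finset.range N, Φ l ω) 2 P :=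
      memLp_finsetSum _ fun l _ => hΦ l
    have hcross_int : Integrable (fun ω => (∑ l ∈ Finset.range N, Φ l ω) * Φ N ω) P :=
      hsum.integrable_mul (hΦ N)
    have hprod (l : ℕ) : Integrable (fun ω => Φ l ω * Φ N ω) P := (hΦ l).integrable_mul (hΦ N)
    have hcross : ∫ ω, (∑ l ∈ Finset.range N, Φ l ω) * Φ N ω ∂P ≤ B / (1 - r) := by
      simp only [Finset.sum_mul]
      rw [integral_finsetSum _ fun l _ => hprod l, ← Finset.sum_range_reflect]
      calc ∑ j ∈ Finset.range N, ∫ ω, Φ (N - 1 - j) ω * Φ N ω ∂P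
          ≤ ∑ j ∈ Finset.range N, B * r ^ j := Finset.sum_le_sum fun j hj => by
            simpa only [show N - 1 - j + 1 + j = N by have := Finset.mem_range.1 hj; omega]
              using hcov (N - 1 - j) j
        _ ≤ B * (1 - r)⁻¹ := by
            rw [← Finset.mul_sum]
            exact mul_le_mul_of_nonneg_left
              (sum_le_hasSum _ (fun _ _ => by positivity) (hasSum_geometric_of_lt_one hr₀ hr₁)) hB
        _ = B / (1 - r) := rfl
    calc ∫ ω, (∑ l ∈ Finset.range (N + 1), Φ l ω) ^ 2 ∂P
        = ∫ ω, (∑ l ∈ Finset.range N, Φ l ω) ^ 2 ∂P +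
            2 * ∫ ω, (∑ l ∈ Finset.range N, Φ l ω) * Φ N ω ∂P + ∫ ω, Φ N ω ^ 2 ∂P := by
          have htwice := hcross_int.const_mul 2
          rw [← integral_const_mul, ← integral_add hsum.integrable_sq htwice,
            ← integral_add (hsum.integrable_sq.fun_add htwice) (hΦ N).integrable_sq]
          congr with ω
          rw [Finset.sum_range_succ]
          ring
      _ ≤ (A + 2 * B / (1 - r)) * N + 2 * (B / (1 - r)) + A := by
          gcongr
          exact hdiag N
      _ = (A + 2 * B / (1 - r)) * ↑(N + 1) := by
          push_cast
          ring

section Mixing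

variable {S : Type*} [MeasurableSpace S] [MetricSpace S]

/-- The mean distance from the transition `p` to an independent stationary transition, that is, one
of law `μstar ⊗ₘ π`. It dominates the centred Lipschitz functions of `p` and, in the spectral gap
bound, their conditional expectations given the past. -/
noncomputable def stationaryDist (π : Kernel S S) (μstar : Measure S) (p : S × S) : ℝ :=
  ∫ q, dist p q ∂(μstar ⊗ₘ π)

theorem stationaryDist_nonneg (π : Kernel S S) (μstar : Measure S) (p : S × S) :
    0 ≤ stationaryDist π μstar p :=
  integral_nonneg fun _ => dist_nonneg

variable [SecondCountableTopology S] [BorelSpace S] {π : Kernel S S} {C γ K : ℝ≥0}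
  {ν μstar : Measure S} {P : Measure (ℕ → S)} {f : S × S → ℝ}

namespace HasWassersteinGap

variable [IsMarkovKernel π]

theorem finiteFirstMoment_compProd (hπ : HasWassersteinGap π C γ) (hν : FiniteFirstMoment ν) :
    FiniteFirstMoment (ν ⊗ₘ π) := by
  have := hν.1
  obtain ⟨x₀, -⟩ := hν.2
  have hfst : Integrable (fun p : S × S => dist x₀ p.1) (ν ⊗ₘ π) := by
    have h := hν.integrable_dist x₀
    rw [← Measure.fst_compProd ν π] at h
    exact h.comp_measurable measurable_fst
  have hsnd : Integrable (fun p : S × S => dist x₀ p.2) (ν ⊗ₘ π) := by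
    have h := (hπ.finiteFirstMoment hν).integrable_dist x₀
    rw [Pmeas, ← Measure.snd_compProd ν π] at h
    exact h.comp_measurable measurable_snd
  exact ⟨inferInstance, (x₀, x₀), hfst.sup hsnd⟩

theorem lipschitzWith_transitionMean (hπ : HasWassersteinGap π C γ) (hf : LipschitzWith K f) :
    LipschitzWith (K * (1 + C * γ)) (transitionMean π f) := by
  have hsection (x : S) : LipschitzWith K fun z => f (x, z) :=
    (hf.comp (LipschitzWith.prodMk_left x)).weaken (mul_one K).le
  have hint (x y : S) : Integrable (fun z => f (x, z)) (π y) :=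
    (hπ.finiteFirstMoment_apply y).integrable_of_lipschitz (hsection x)
  have hgap (x y : S) :
      dist (∫ z, f (y, z) ∂π x) (∫ z, f (y, z) ∂π y) ≤ K * (C * γ) * dist x y := by
    have h := (hπ.lipschitzWith_integral_iterate_Pmeas_dirac (hsection y) 1).dist_le_mul x y
    simp only [Function.iterate_one, Pmeas_dirac, pow_one] at h
    exact_mod_cast h
  refine LipschitzWith.of_dist_le_mul fun x y => ?_
  have hfst : dist (∫ z, f (x, z) ∂π x) (∫ z, f (y, z) ∂π x) ≤ K * dist x y := by
    rw [Real.dist_eq, ← integral_sub (hint x x) (hint y x)]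
    have hz (z : S) : ‖f (x, z) - f (y, z)‖ ≤ K * dist x y := by
      simpa [Prod.dist_eq, Real.dist_eq] using hf.dist_le_mul (x, z) (y, z)
    simpa using norm_integral_le_of_norm_le_const (μ := π x) (ae_of_all _ hz)
  refine (dist_triangle _ _ _).trans ((add_le_add hfst (hgap x y)).trans_eq ?_)
  push_cast
  ring

theorem integral_dist_snd_le_stationaryDist (hπ : HasWassersteinGap π C γ)
    (hμstar : FiniteFirstMoment μstar) (hinv : Pmeas π μstar = μstar) (p : S × S) :
    ∫ y, dist p.2 y ∂μstar ≤ stationaryDist π μstar p := by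
  have := hμstar.1
  have hΛ := hπ.finiteFirstMoment_compProd hμstar
  have hlip : LipschitzWith 1 fun q : S × S => dist p.2 q.2 :=
    .of_dist_le_mul fun q q' => by
      rw [NNReal.coe_one, one_mul]
      exact (dist_dist_dist_le_right p.2 q.2 q'.2).trans (le_max_right _ _)
  have hsnd : (μstar ⊗ₘ π).snd = μstar := (Measure.snd_compProd μstar π).trans hinv
  calc ∫ y, dist p.2 y ∂μstar = ∫ q, dist p.2 q.2 ∂(μstar ⊗ₘ π) := by
        conv_lhs => rw [← hsnd, Measure.snd]
        exact integral_map measurable_snd.aemeasurable (by fun_prop)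
    _ ≤ stationaryDist π μstar p :=
        integral_mono (hΛ.integrable_of_lipschitz hlip) (hΛ.integrable_dist p)
          fun q => le_max_right _ _

theorem ae_abs_condExp_transition_sub_le (hπ : HasWassersteinGap π C γ)
    (hμstar : FiniteFirstMoment μstar) (hinv : Pmeas π μstar = μstar)
    (hP : IsMarkovChainLaw π ν P) (hf : LipschitzWith K f) {n j : ℕ}
    (hint : Integrable (fun ω => f (transition (n + 1 + j) ω)) P) :
    ∀ᵐ ω ∂P, |(P[fun ω => f (transition (n + 1 + j) ω) | natFilt (n + 1)]) ω -
        ∫ p, f p ∂(μstar ⊗ₘ π)| ≤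
      K * (1 + C * γ) * (C * γ ^ j) * stationaryDist π μstar (transition n ω) := by
  have := hμstar.1
  have hmean : ∫ p, f p ∂(μstar ⊗ₘ π) = ∫ x, transitionMean π f x ∂μstar :=
    Measure.integral_compProd ((hπ.finiteFirstMoment_compProd hμstar).integrable_of_lipschitz hf)
  filter_upwards [hP.condExp_transition_add hf.continuous.measurable hint] with ω hω
  rw [hω, hmean]
  have hgap := hπ.abs_iterate_Pfun_sub_integral_le (hπ.lipschitzWith_transitionMean hf) hμstar hinv
    j (ω (n + 1))
  push_cast at hgap
  refine hgap.trans ?_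
  gcongr
  exact hπ.integral_dist_snd_le_stationaryDist hμstar hinv (transition n ω)

theorem abs_le_mul_stationaryDist (hπ : HasWassersteinGap π C γ)
    (hμstar : FiniteFirstMoment μstar) (hf : LipschitzWith K f)
    (hf₀ : ∫ p, f p ∂(μstar ⊗ₘ π) = 0) (p : S × S) : |f p| ≤ K * stationaryDist π μstar p := by
  simpa only [hf₀, sub_zero, stationaryDist] using
    (hπ.finiteFirstMoment_compProd hμstar).abs_apply_sub_integral_le hf p

theorem memLp_transition (hπ : HasWassersteinGap π C γ) (hμstar : FiniteFirstMoment μstar)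
    (hf : LipschitzWith K f) (hf₀ : ∫ p, f p ∂(μstar ⊗ₘ π) = 0) {q : ℝ≥0∞} {n : ℕ}
    (hV : MemLp (fun ω => stationaryDist π μstar (transition n ω)) q P) :
    MemLp (fun ω => f (transition n ω)) q P :=
  (hV.const_mul (K : ℝ)).mono'
    (hf.continuous.measurable.comp (measurable_transition n)).aestronglyMeasurable
    (ae_of_all _ fun ω => hπ.abs_le_mul_stationaryDist hμstar hf hf₀ (transition n ω))

theorem integral_mul_transition_le (hπ : HasWassersteinGap π C γ)
    (hμstar : FiniteFirstMoment μstar) (hinv : Pmeas π μstar = μstar)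
    (hP : IsMarkovChainLaw π ν P) (hf : LipschitzWith K f)
    (hf₀ : ∫ p, f p ∂(μstar ⊗ₘ π) = 0)
    (hL2 : ∀ n, MemLp (fun ω => f (transition n ω)) 2 P) {n j : ℕ}
    (hV : Integrable (fun ω => stationaryDist π μstar (transition n ω) ^ 2) P) :
    ∫ ω, f (transition n ω) * f (transition (n + 1 + j) ω) ∂P ≤
      K ^ 2 * (1 + C * γ) * (C * γ ^ j) *
        ∫ ω, stationaryDist π μstar (transition n ω) ^ 2 ∂P := by
  have := hP.prob
  have hmeas : StronglyMeasurable[natFilt (n + 1)] fun ω => f (transition n ω) :=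
    (hf.continuous.measurable.comp ((measurable_natFilt_apply n.le_succ).prodMk
      (measurable_natFilt_apply le_rfl))).stronglyMeasurable
  have hint := (hL2 (n + 1 + j)).integrable one_le_two
  have hcond := condExp_mul_of_stronglyMeasurable_left hmeas ((hL2 n).integrable_mul (hL2 _)) hint
  have hdecay := hπ.ae_abs_condExp_transition_sub_le hμstar hinv hP hf hint
  rw [hf₀] at hdecay
  calc ∫ ω, f (transition n ω) * f (transition (n + 1 + j) ω) ∂P
      = ∫ ω, f (transition n ω) *
          (P[fun ω => f (transition (n + 1 + j) ω) | natFilt (n + 1)]) ω ∂P := by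
        rw [← integral_condExp (natFilt.le (n + 1))]
        exact integral_congr_ae hcond
    _ ≤ ∫ ω, K ^ 2 * (1 + C * γ) * (C * γ ^ j) *
          stationaryDist π μstar (transition n ω) ^ 2 ∂P := by
        refine (Real.le_norm_self _).trans
          (norm_integral_le_of_norm_le (hV.const_mul _) (hdecay.mono fun ω hω => ?_))
        rw [norm_mul, Real.norm_eq_abs, Real.norm_eq_abs]
        rw [sub_zero] at hω
        refine (mul_le_mul (hπ.abs_le_mul_stationaryDist hμstar hf hf₀ _) hω (abs_nonneg _)
          (mul_nonneg K.2 (stationaryDist_nonneg _ _ _))).trans_eq ?_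
        ring
    _ = _ := integral_const_mul _ _

theorem integral_sq_sum_transition_le (hπ : HasWassersteinGap π C γ)
    (hμstar : FiniteFirstMoment μstar) (hinv : Pmeas π μstar = μstar)
    (hP : IsMarkovChainLaw π ν P) {M : ℝ}
    (hV : ∀ n, MemLp (fun ω => stationaryDist π μstar (transition n ω)) 2 P)
    (hVM : ∀ n, ∫ ω, stationaryDist π μstar (transition n ω) ^ 2 ∂P ≤ M)
    (hf : LipschitzWith K f) (hf₀ : ∫ p, f p ∂(μstar ⊗ₘ π) = 0) {s : ℕ → ℕ} (hs : StrictMono s)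
    (N : ℕ) :
    ∫ ω, (∑ l ∈ Finset.range N, f (transition (s l) ω)) ^ 2 ∂P ≤
      (1 + 2 * ((1 + C * γ) * C) / (1 - γ)) * M * K ^ 2 * N := by
  have hbound (n : ℕ) (ω : ℕ → S) := hπ.abs_le_mul_stationaryDist hμstar hf hf₀ (transition n ω)
  have hL2 (n : ℕ) : MemLp (fun ω => f (transition n ω)) 2 P :=
    hπ.memLp_transition hμstar hf hf₀ (hV n)
  have hγ : (γ : ℝ) < 1 := hπ.lt_one
  have hM : 0 ≤ M := (integral_nonneg fun _ => sq_nonneg _).trans (hVM 0)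
  have hdiag (l : ℕ) : ∫ ω, f (transition (s l) ω) ^ 2 ∂P ≤ K ^ 2 * M := by
    refine le_trans ?_ (mul_le_mul_of_nonneg_left (hVM (s l)) (sq_nonneg _))
    rw [← integral_const_mul]
    refine integral_mono (hL2 _).integrable_sq ((hV _).integrable_sq.const_mul _) fun ω => ?_
    rw [← mul_pow]
    exact sq_le_sq' (neg_le_of_abs_le (hbound _ ω)) (le_of_abs_le (hbound _ ω))
  have hcov (l j : ℕ) : ∫ ω, f (transition (s l) ω) * f (transition (s (l + 1 + j)) ω) ∂P ≤
      K ^ 2 * (1 + C * γ) * C * M * γ ^ j := by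
    obtain ⟨i, hi⟩ := Nat.exists_eq_add_of_le (hs.add_le_nat (1 + j) l)
    rw [show s (l + 1 + j) = s l + 1 + (j + i) by rw [add_assoc l, add_comm l, hi]; ring]
    refine (hπ.integral_mul_transition_le hμstar hinv hP hf hf₀ hL2 (hV _).integrable_sq).trans ?_
    calc _ ≤ K ^ 2 * (1 + C * γ) * (C * γ ^ j) * M := by
          gcongr K ^ 2 * (1 + C * γ) * (C * ?_) * ?_
          · exact pow_le_pow_of_le_one γ.coe_nonneg hγ.le (j.le_add_right i)
          · exact hVM (s l)
      _ = _ := by ring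
  refine (integral_sq_sum_range_le (fun l => hL2 (s l)) γ.coe_nonneg hγ (by positivity) hdiag hcov
    N).trans_eq ?_
  ring

end HasWassersteinGap

end Mixing

section LawOfLargeNumbers

variable {Ω : Type*} [MeasurableSpace Ω] {P : Measure Ω} [IsFiniteMeasure P]

theorem summable_nat_floor_pow_rpow_neg {α θ : ℝ} (hα : 1 < α) (hθ : 0 < θ) :
    Summable fun k : ℕ => (⌊α ^ k⌋₊ : ℝ) ^ (-θ) := by
  have hα₀ : 0 < α := zero_lt_one.trans hα
  have hgap : 0 < 1 - α⁻¹ := sub_pos.2 (inv_lt_one_of_one_lt₀ hα)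
  refine .of_nonneg_of_le (fun k => by positivity) (fun k => ?_)
    ((summable_geometric_of_lt_one (by positivity)
      (Real.rpow_lt_one_of_one_lt_of_neg hα (neg_lt_zero.2 hθ))).mul_left ((1 - α⁻¹) ^ (-θ)))
  calc (⌊α ^ k⌋₊ : ℝ) ^ (-θ) ≤ ((1 - α⁻¹) * α ^ k) ^ (-θ) :=
        Real.rpow_le_rpow_of_nonpos (by positivity) (mul_pow_le_nat_floor_pow hα k)
          (neg_nonpos.2 hθ.le)
    _ = (1 - α⁻¹) ^ (-θ) * (α ^ (-θ)) ^ k := by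
        rw [Real.mul_rpow hgap.le (by positivity), Real.rpow_pow_comm hα₀.le]

theorem ae_tendsto_of_summable_measureReal {X : ℕ → Ω → ℝ} {a : ℝ}
    (h : ∀ ε > 0, Summable fun k => P.real {ω | ε ≤ |X k ω - a|}) :
    ∀ᵐ ω ∂P, Tendsto (fun k => X k ω) atTop (𝓝 a) := by
  have hsmall (m : ℕ) : ∀ᵐ ω ∂P, ∀ᶠ k in atTop, |X k ω - a| < 1 / ((m : ℝ) + 1) := by
    have hsum := (h _ (Nat.one_div_pos_of_nat (n := m))).tsum_ofReal_ne_top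
    simp only [Measure.real, ENNReal.ofReal_toReal (measure_ne_top _ _)] at hsum
    filter_upwards [ae_eventually_notMem hsum] with ω hω
    exact hω.mono fun k hk => not_le.1 hk
  filter_upwards [ae_all_iff.2 hsmall] with ω hω
  refine Metric.tendsto_nhds.2 fun ε hε => ?_
  obtain ⟨m, hm⟩ := exists_nat_one_div_lt hε
  exact (hω m).mono fun k hk => hk.trans hm

theorem ae_tendsto_div_of_monotone_of_measureReal_isBigO {Y : ℕ → Ω → ℝ} {a θ : ℝ}
    (hmono : ∀ ω, Monotone fun n => Y n ω) (hθ : 0 < θ)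
    (h : ∀ ε > 0, (fun n : ℕ => P.real {ω | ε ≤ |Y n ω / n - a|}) =O[atTop]
      fun n => (n : ℝ) ^ (-θ)) :
    ∀ᵐ ω ∂P, Tendsto (fun n : ℕ => Y n ω / n) atTop (𝓝 a) := by
  obtain ⟨α, -, hα, hα₁⟩ := exists_seq_strictAnti_tendsto (1 : ℝ)
  have hfloor (j : ℕ) : ∀ᵐ ω ∂P,
      Tendsto (fun k : ℕ => Y ⌊α j ^ k⌋₊ ω / ⌊α j ^ k⌋₊) atTop (𝓝 a) :=
    ae_tendsto_of_summable_measureReal (X := fun k ω => Y ⌊α j ^ k⌋₊ ω / ⌊α j ^ k⌋₊) fun ε hε =>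
      summable_of_isBigO_nat (summable_nat_floor_pow_rpow_neg (hα j) hθ)
        ((h ε hε).comp_tendsto
          (tendsto_nat_floor_atTop.comp (tendsto_pow_atTop_atTop_of_one_lt (hα j))))
  filter_upwards [ae_all_iff.2 hfloor] with ω hω
  exact tendsto_div_of_monotone_of_tendsto_div_floor_pow _ _ (hmono ω) α hα hα₁ hω

theorem measureReal_le_abs_average_sub_le {Y : ℕ → Ω → ℝ} {N : ℕ} {a m ε T : ℝ}
    (hmeas : ∀ l, AEStronglyMeasurable (Y l) P) (hY : ∀ l ω, 0 ≤ Y l ω) (hN : 0 < N) (hε : 0 < ε)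
    (hT : 0 ≤ T) (hm : |m - a| ≤ ε) :
    P.real {ω | 2 * ε ≤ |(∑ l ∈ Finset.range N, Y l ω) / N - a|} ≤
      ∑ l ∈ Finset.range N, P.real {ω | T < Y l ω} +
        (∫ ω, (∑ l ∈ Finset.range N, (min (Y l ω) T - m)) ^ 2 ∂P) / (ε * N) ^ 2 := by
  have hbdd (l : ℕ) : MemLp (fun ω => min (Y l ω) T) 2 P :=
    .of_bound ((hmeas l).inf aestronglyMeasurable_const) T (ae_of_all _ fun ω => by
      rw [Real.norm_of_nonneg (le_min (hY l ω) hT)]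
      exact min_le_right _ _)
  have hint : Integrable (fun ω => (∑ l ∈ Finset.range N, (min (Y l ω) T - m)) ^ 2) P :=
    (memLp_finsetSum _ fun l _ => (hbdd l).sub (memLp_const m)).integrable_sq
  have hsub : {ω | 2 * ε ≤ |(∑ l ∈ Finset.range N, Y l ω) / N - a|} ⊆
      (⋃ l ∈ Finset.range N, {ω | T < Y l ω}) ∪
        {ω | (ε * N) ^ 2 ≤ (∑ l ∈ Finset.range N, (min (Y l ω) T - m)) ^ 2} := by
    intro ω hω
    by_cases hexc : ∃ l ∈ Finset.range N, T < Y l ω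
    · exact .inl (by simpa using hexc)
    push Not at hexc
    right
    have hsum : ∑ l ∈ Finset.range N, (min (Y l ω) T - m) =
        ((∑ l ∈ Finset.range N, Y l ω) / N - m) * N := by
      rw [Finset.sum_congr rfl fun l hl => by rw [min_eq_left (hexc l hl)]]
      simp only [Finset.sum_sub_distrib, Finset.sum_const, Finset.card_range, nsmul_eq_mul]
      field_simp
    have hdev : ε ≤ |(∑ l ∈ Finset.range N, Y l ω) / N - m| := by
      have htri := abs_sub_le ((∑ l ∈ Finset.range N, Y l ω) / N) m a
      have hω' : 2 * ε ≤ |(∑ l ∈ Finset.range N, Y l ω) / N - a| := hω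
      linarith
    rw [Set.mem_ofPred_eq, hsum, mul_pow, mul_pow, ← sq_abs (_ / _ - m)]
    gcongr
  refine (measureReal_mono hsub).trans ((measureReal_union_le _ _).trans (add_le_add
    (measureReal_biUnion_finset_le _ _) ?_))
  rw [le_div_iff₀' (by positivity)]
  exact mul_meas_ge_le_integral_of_nonneg (ae_of_all _ fun _ => sq_nonneg _) hint _

/-- The exponent `2 / (p + 1)` of the truncation level balances the truncation error `N * T ^ (-p)`
against the variance term `T / N`: both are then `N ^ (-((p - 1) / (p + 1)))`. -/
theorem ae_tendsto_average_of_truncated_variance_le {Y : ℕ → Ω → ℝ} {m : ℝ → ℝ} {a p A B : ℝ}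
    (hmeas : ∀ l, AEStronglyMeasurable (Y l) P) (hY : ∀ l ω, 0 ≤ Y l ω) (hp : 1 < p)
    (htail : ∀ l, ∀ T > 0, P.real {ω | T < Y l ω} ≤ A * T ^ (-p))
    (hm : Tendsto m atTop (𝓝 a))
    (hvar : ∀ N, ∀ T > 0,
      ∫ ω, (∑ l ∈ Finset.range N, (min (Y l ω) T - m T)) ^ 2 ∂P ≤ B * T * N) :
    ∀ᵐ ω ∂P, Tendsto (fun n : ℕ => (∑ l ∈ Finset.range n, Y l ω) / n) atTop (𝓝 a) := by
  have hθ : 0 < (p - 1) / (p + 1) := div_pos (by linarith) (by linarith)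
  refine ae_tendsto_div_of_monotone_of_measureReal_isBigO
    (Y := fun n ω => ∑ l ∈ Finset.range n, Y l ω)
    (fun ω => (Finset.sum_mono_set_of_nonneg (hY · ω)).comp Finset.range_mono) hθ fun ε hε => ?_
  have hlevel : Tendsto (fun N : ℕ => (N : ℝ) ^ (2 / (p + 1))) atTop atTop :=
    (tendsto_rpow_atTop (div_pos two_pos (by linarith))).comp tendsto_natCast_atTop_atTop
  refine .of_bound (A + B / (ε / 2) ^ 2) ?_
  filter_upwards [(hm.comp hlevel).eventually (Metric.closedBall_mem_nhds a (half_pos hε)),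
    eventually_gt_atTop 0] with N hmN hN
  have hN' : (0 : ℝ) < N := by exact_mod_cast hN
  have hT : 0 < (N : ℝ) ^ (2 / (p + 1)) := by positivity
  have h := measureReal_le_abs_average_sub_le hmeas hY hN (half_pos hε) hT.le hmN
  rw [mul_div_cancel₀ ε two_ne_zero] at h
  rw [Real.norm_of_nonneg measureReal_nonneg, Real.norm_of_nonneg (by positivity)]
  refine (h.trans (add_le_add (Finset.sum_le_sum fun l _ => htail l _ hT)
    (div_le_div_of_nonneg_right (hvar N _ hT) (sq_nonneg _)))).trans_eq ?_
  have hexp : 1 + 2 / (p + 1) * -p = -((p - 1) / (p + 1)) := by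
    field_simp
    ring
  have htrunc : (N : ℝ) * ((N : ℝ) ^ (2 / (p + 1))) ^ (-p) = N ^ (-((p - 1) / (p + 1))) := by
    rw [← Real.rpow_mul hN'.le, ← hexp, Real.rpow_one_add' hN'.le (hexp ▸ (neg_lt_zero.2 hθ).ne)]
  have hfluct : (N : ℝ) ^ (2 / (p + 1)) / N = N ^ (-((p - 1) / (p + 1))) := by
    rw [← Real.rpow_sub_one hN'.ne']
    congr 1
    field_simp
    ring
  rw [Finset.sum_const, Finset.card_range, nsmul_eq_mul, add_mul]
  nth_rw 1 [← htrunc]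
  rw [← hfluct]
  field_simp

end LawOfLargeNumbers

section Moments

variable {Ω : Type*} [MeasurableSpace Ω] {P : Measure Ω} {X : Ω → ℝ} {M : ℝ≥0}

theorem eLpNorm_le_of_integral_rpow_norm_le {q : ℝ≥0} (hq : q ≠ 0)
    (hX : AEStronglyMeasurable X P) (hint : Integrable (fun ω => ‖X ω‖ ^ (q : ℝ)) P) {A : ℝ}
    (hA : ∫ ω, ‖X ω‖ ^ (q : ℝ) ∂P ≤ A) : eLpNorm X q P ≤ ENNReal.ofReal (A ^ (q⁻¹ : ℝ)) := by
  have hmem : MemLp X q P :=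
    (integrable_norm_rpow_iff hX (by simpa using hq) ENNReal.coe_ne_top).1 hint
  rw [hmem.eLpNorm_eq_integral_rpow_norm (by simpa using hq) ENNReal.coe_ne_top]
  exact ENNReal.ofReal_le_ofReal (Real.rpow_le_rpow (integral_nonneg fun _ => by positivity) hA
    (by positivity))

theorem integral_sq_le_of_eLpNorm_two_le (hX : AEStronglyMeasurable X P)
    (hM : eLpNorm X 2 P ≤ M) : ∫ ω, X ω ^ 2 ∂P ≤ M ^ 2 := by
  have hmem : MemLp X 2 P := ⟨hX, hM.trans_lt ENNReal.coe_lt_top⟩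
  have hnorm : 0 ≤ ∫ ω, X ω ^ 2 ∂P := integral_nonneg fun _ => sq_nonneg _
  rw [hmem.eLpNorm_eq_integral_rpow_norm two_ne_zero ENNReal.ofNat_ne_top] at hM
  have hsqrt : √(∫ ω, X ω ^ 2 ∂P) ≤ M := by
    rw [Real.sqrt_eq_rpow]
    simpa using hM
  exact (Real.sqrt_le_left M.2).1 hsqrt

theorem measureReal_lt_sq_le_of_eLpNorm_le {q : ℝ≥0} (hq : q ≠ 0) (hX : AEStronglyMeasurable X P)
    (hM : eLpNorm X q P ≤ M) {T : ℝ} (hT : 0 < T) :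
    P.real {ω | T < X ω ^ 2} ≤ M ^ (q : ℝ) * T ^ (-(q / 2 : ℝ)) := by
  have hsub : {ω | T < X ω ^ 2} ⊆ {ω | ENNReal.ofReal √T ≤ ‖X ω‖ₑ} := fun ω hω => by
    rw [Set.mem_ofPred_eq, ← ofReal_norm]
    exact ENNReal.ofReal_le_ofReal ((Real.sqrt_le_sqrt hω.le).trans_eq (Real.sqrt_sq_eq_abs _))
  have hlevel : ENNReal.ofReal √T ≠ 0 := by simpa using Real.sqrt_pos.2 hT
  refine ENNReal.toReal_le_of_le_ofReal (by positivity) ((measure_mono hsub).trans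
    ((meas_ge_le_mul_pow_eLpNorm_enorm P (by simpa using hq) ENNReal.coe_ne_top hX hlevel
      (absurd · ENNReal.ofReal_ne_top)).trans ((mul_le_mul_right
        (ENNReal.rpow_le_rpow hM q.coe_nonneg) _).trans_eq ?_)))
  rw [mul_comm, ENNReal.coe_toReal, ENNReal.inv_rpow, ← ENNReal.rpow_neg,
    ENNReal.ofReal_rpow_of_pos (Real.sqrt_pos.2 hT), ENNReal.ofReal_mul (by positivity),
    ← ENNReal.ofReal_coe_nnreal, ENNReal.ofReal_rpow_of_nonneg M.coe_nonneg q.coe_nonneg,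
    Real.sqrt_eq_rpow, ← Real.rpow_mul hT.le]
  ring_nf

theorem integrable_of_integral_min_le [IsFiniteMeasure P] (hX : Measurable X) (hX₀ : ∀ ω, 0 ≤ X ω)
    {A : ℝ} (hA : ∀ T > 0, ∫ ω, min (X ω) T ∂P ≤ A) : Integrable X P := by
  have hlim : eLpNorm X 1 P ≤ atTop.liminf fun n : ℕ => eLpNorm (fun ω => min (X ω) n) 1 P := by
    refine Lp.eLpNorm_lim_le_liminf_eLpNorm (fun n => by fun_prop) X (ae_of_all _ fun ω => ?_)
    refine tendsto_const_nhds.congr' ?_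
    filter_upwards [eventually_ge_atTop ⌈X ω⌉₊] with n hn
    exact (min_eq_left (Nat.ceil_le.1 hn)).symm
  refine memLp_one_iff_integrable.1 ⟨hX.aestronglyMeasurable, (hlim.trans
    (liminf_le_of_frequently_le' (Eventually.frequently ?_))).trans_lt
      (ENNReal.ofReal_lt_top (r := A))⟩
  filter_upwards [eventually_gt_atTop 0] with n hn
  have hbdd : Integrable (fun ω => min (X ω) n) P :=
    .of_bound (by fun_prop) n (ae_of_all _ fun ω => by
      rw [Real.norm_of_nonneg (le_min (hX₀ ω) n.cast_nonneg)]
      exact min_le_right _ _)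
  rw [eLpNorm_one_eq_lintegral_enorm, ← ofReal_integral_norm_eq_lintegral_enorm hbdd]
  simp only [Real.norm_of_nonneg (le_min (hX₀ _) n.cast_nonneg)]
  exact ENNReal.ofReal_le_ofReal (hA n (by exact_mod_cast hn))

theorem tendsto_integral_min_atTop (hX : Integrable X P) (hX₀ : ∀ ω, 0 ≤ X ω) :
    Tendsto (fun T => ∫ ω, min (X ω) T ∂P) atTop (𝓝 (∫ ω, X ω ∂P)) := by
  refine tendsto_integral_filter_of_dominated_convergence X
    (.of_forall fun T => hX.aestronglyMeasurable.inf aestronglyMeasurable_const) ?_ hX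
    (ae_of_all _ fun ω => ?_)
  · filter_upwards [eventually_ge_atTop 0] with T hT
    refine ae_of_all _ fun ω => ?_
    rw [Real.norm_of_nonneg (le_min (hX₀ ω) hT)]
    exact min_le_left _ _
  · refine tendsto_const_nhds.congr' ?_
    filter_upwards [eventually_ge_atTop (X ω)] with T hT
    exact (min_eq_left hT).symm

end Moments

theorem lipschitzWith_min_sq {α : Type*} [PseudoEMetricSpace α] {f : α → ℝ} {K : ℝ≥0}
    (hf : LipschitzWith K f) (T : ℝ≥0) :
    LipschitzWith (2 * NNReal.sqrt T * K) fun x => min (f x ^ 2) T := by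
  suffices h : LipschitzWith (2 * NNReal.sqrt T) fun a : ℝ => min (a ^ 2) T from h.comp hf
  have hsq (a : ℝ) : min (a ^ 2) T = min |a| √T ^ 2 := by
    rcases le_total |a| √T with h | h
    · rw [min_eq_left h, sq_abs,
        min_eq_left ((sq_abs a).symm.trans_le ((Real.le_sqrt (abs_nonneg a) T.coe_nonneg).1 h))]
    · rw [min_eq_right h, Real.sq_sqrt T.coe_nonneg,
        min_eq_right (sq_abs a ▸ (Real.sqrt_le_left (abs_nonneg a)).1 h)]
  refine LipschitzWith.of_dist_le_mul fun a b => ?_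
  have hsub : |min |a| √T - min |b| √T| ≤ |a - b| :=
    (abs_min_sub_min_le_max _ _ _ _).trans
      (max_le (abs_abs_sub_abs_le a b) (by simp))
  have hadd : |min |a| √T + min |b| √T| ≤ 2 * √T := by
    rw [abs_of_nonneg (by positivity)]
    linarith [min_le_right |a| √T, min_le_right |b| √T]
  calc dist (min (a ^ 2) (T : ℝ)) (min (b ^ 2) T)
      = |min |a| √T + min |b| √T| * |min |a| √T - min |b| √T| := by
        rw [hsq, hsq, Real.dist_eq, sq_sub_sq, abs_mul]
    _ ≤ 2 * √T * |a - b| := by gcongr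
    _ = ↑(2 * NNReal.sqrt T) * dist a b := by
        rw [NNReal.coe_mul, NNReal.coe_ofNat, Real.coe_sqrt, Real.dist_eq]

theorem norm_apply_prod_le_of_lipschitzWith {α : Type*} [PseudoMetricSpace α] {f : α × α → ℝ}
    {K : ℝ≥0} (hf : LipschitzWith K f) (x₀ : α) (p : α × α) :
    ‖f p‖ ≤ ‖f (x₀, x₀)‖ + K * (dist x₀ p.1 + dist x₀ p.2) := by
  have hdist : dist p (x₀, x₀) ≤ dist x₀ p.1 + dist x₀ p.2 := by
    rw [dist_comm, Prod.dist_eq]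
    exact max_le_add_of_nonneg dist_nonneg dist_nonneg
  calc ‖f p‖ ≤ ‖f (x₀, x₀)‖ + dist (f p) (f (x₀, x₀)) :=
        dist_eq_norm (f p) _ ▸ norm_le_norm_add_norm_sub' _ _
    _ ≤ ‖f (x₀, x₀)‖ + K * dist p (x₀, x₀) := by gcongr; exact hf.dist_le_mul _ _
    _ ≤ _ := by gcongr

section Transitions

variable {S : Type*} [MeasurableSpace S] [MetricSpace S] [SecondCountableTopology S] [BorelSpace S]
  {π : Kernel S S} {C γ K : ℝ≥0} {ν μstar : Measure S} {P : Measure (ℕ → S)} {f : S × S → ℝ}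

theorem exists_memLp_transition [IsFiniteMeasure P] {q : ℝ≥0∞} (hq : 1 ≤ q) {x₀ : S} {M : ℝ≥0}
    (hM : ∀ n, eLpNorm (fun ω => dist x₀ (ω n)) q P ≤ M) (hf : LipschitzWith K f) :
    ∃ M' : ℝ≥0, ∀ n, MemLp (fun ω => f (transition n ω)) q P ∧
      eLpNorm (fun ω => f (transition n ω)) q P ≤ M' := by
  have hmeas (n : ℕ) : AEStronglyMeasurable (fun ω : ℕ → S => dist x₀ (ω n)) P :=
    (measurable_const.dist (measurable_pi_apply n)).aestronglyMeasurable
  have hconst : eLpNorm (fun _ : ℕ → S => ‖f (x₀, x₀)‖) q P ≠ ∞ := (memLp_const _).2.ne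
  have hbound (n : ℕ) : eLpNorm (fun ω => f (transition n ω)) q P ≤
      ↑((eLpNorm (fun _ : ℕ → S => ‖f (x₀, x₀)‖) q P).toNNReal + K * (M + M)) := by
    calc eLpNorm (fun ω => f (transition n ω)) q P
        ≤ eLpNorm ((fun _ => ‖f (x₀, x₀)‖) +
            (K : ℝ) • ((fun ω => dist x₀ (ω n)) + fun ω => dist x₀ (ω (n + 1)))) q P :=
          eLpNorm_mono_real fun ω => norm_apply_prod_le_of_lipschitzWith hf x₀ (transition n ω)
      _ ≤ eLpNorm (fun _ => ‖f (x₀, x₀)‖) q P + K * (eLpNorm (fun ω => dist x₀ (ω n)) q P +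
            eLpNorm (fun ω => dist x₀ (ω (n + 1))) q P) := by
          refine (eLpNorm_add_le aestronglyMeasurable_const
            (((hmeas n).add (hmeas (n + 1))).const_smul _) hq).trans ?_
          rw [eLpNorm_const_smul, Real.enorm_eq_ofReal K.coe_nonneg, ENNReal.ofReal_coe_nnreal]
          gcongr
          exact eLpNorm_add_le (hmeas n) (hmeas (n + 1)) hq
      _ ≤ _ := by
          push_cast
          rw [ENNReal.coe_toNNReal hconst]
          gcongr
          · exact hM n
          · exact hM (n + 1)
  exact ⟨_, fun n => ⟨⟨(hf.continuous.measurable.comp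
    (measurable_transition n)).aestronglyMeasurable,
      (hbound n).trans_lt ENNReal.coe_lt_top⟩, hbound n⟩⟩

variable [IsMarkovKernel π]

theorem IsMarkovChainLaw.map_transition_zero (hP : IsMarkovChainLaw π ν P) :
    P.map (transition 0) = ν ⊗ₘ π := by
  have h := hP.map_transition_restrict (n := 0) .univ
  rwa [Measure.restrict_univ, hP.init] at h

namespace HasWassersteinGap

theorem lipschitzWith_stationaryDist (hπ : HasWassersteinGap π C γ)
    (hμstar : FiniteFirstMoment μstar) : LipschitzWith 1 (stationaryDist π μstar) := by
  have := hμstar.1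
  have hΛ := hπ.finiteFirstMoment_compProd hμstar
  refine LipschitzWith.of_dist_le_mul fun p p' => ?_
  rw [stationaryDist, stationaryDist, Real.dist_eq,
    ← integral_sub (hΛ.integrable_dist p) (hΛ.integrable_dist p'), NNReal.coe_one, one_mul]
  have hq (q : S × S) : ‖dist p q - dist p' q‖ ≤ dist p p' := abs_dist_sub_le p p' q
  simpa using norm_integral_le_of_norm_le_const (μ := μstar ⊗ₘ π) (ae_of_all _ hq)

theorem tendsto_integral_transition (hπ : HasWassersteinGap π C γ)
    (hμstar : FiniteFirstMoment μstar) (hinv : Pmeas π μstar = μstar)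
    (hP : IsMarkovChainLaw π ν P)
    (hV : Integrable (fun ω => stationaryDist π μstar (transition 0 ω)) P)
    (hf : LipschitzWith K f) (hint : ∀ n, Integrable (fun ω => f (transition n ω)) P) :
    Tendsto (fun n => ∫ ω, f (transition n ω) ∂P) atTop (𝓝 (∫ p, f p ∂(μstar ⊗ₘ π))) := by
  have := hP.prob
  have hγ : (γ : ℝ) < 1 := hπ.lt_one
  refine (tendsto_add_atTop_iff_nat 1).1 (tendsto_iff_dist_tendsto_zero.2 ?_)
  have hdecay (j : ℕ) : dist (∫ ω, f (transition (j + 1) ω) ∂P) (∫ p, f p ∂(μstar ⊗ₘ π)) ≤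
      K * (1 + C * γ) * C * (∫ ω, stationaryDist π μstar (transition 0 ω) ∂P) * γ ^ j := by
    have h := hπ.ae_abs_condExp_transition_sub_le hμstar hinv hP hf (n := 0) (hint (0 + 1 + j))
    rw [zero_add, add_comm] at h
    rw [← integral_condExp (natFilt.le 1), Real.dist_eq]
    calc |∫ ω, (P[fun ω => f (transition (j + 1) ω) | natFilt 1]) ω ∂P - ∫ p, f p ∂(μstar ⊗ₘ π)|
        = |∫ ω, ((P[fun ω => f (transition (j + 1) ω) | natFilt 1]) ω -
            ∫ p, f p ∂(μstar ⊗ₘ π)) ∂P| := by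
          rw [integral_sub integrable_condExp (integrable_const _), integral_const,
            probReal_univ, one_smul]
      _ ≤ ∫ ω, K * (1 + C * γ) * (C * γ ^ j) * stationaryDist π μstar (transition 0 ω) ∂P := by
          rw [← Real.norm_eq_abs]
          exact norm_integral_le_of_norm_le (hV.const_mul _) h
      _ = _ := by
          rw [integral_const_mul]
          ring
  refine squeeze_zero (fun _ => dist_nonneg) hdecay ?_
  simpa using (tendsto_pow_atTop_nhds_zero_of_lt_one γ.coe_nonneg hγ).const_mul
    (K * (1 + C * γ) * C * ∫ ω, stationaryDist π μstar (transition 0 ω) ∂P)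

theorem tendsto_integral_min_sq_compProd (hπ : HasWassersteinGap π C γ)
    (hμstar : FiniteFirstMoment μstar) (hinv : Pmeas π μstar = μstar)
    (hP : IsMarkovChainLaw π ν P) {x₀ : S} {M : ℝ≥0}
    (hM : ∀ n, eLpNorm (fun ω => dist x₀ (ω n)) 2 P ≤ M) (hf : LipschitzWith K f) :
    Tendsto (fun T => ∫ p, min (f p ^ 2) T ∂(μstar ⊗ₘ π)) atTop
      (𝓝 (∫ p, f p ^ 2 ∂(μstar ⊗ₘ π))) := by
  have := hP.prob
  have := hμstar.1
  have hint {K : ℝ≥0} {g : S × S → ℝ} (hg : LipschitzWith K g) (n : ℕ) :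
      Integrable (fun ω => g (transition n ω)) P :=
    let ⟨_, hL2⟩ := exists_memLp_transition one_le_two hM hg
    (hL2 n).1.integrable one_le_two
  obtain ⟨M', hfL2⟩ := exists_memLp_transition one_le_two hM hf
  have htrunc (T : ℝ) (hT : 0 < T) : ∫ p, min (f p ^ 2) T ∂(μstar ⊗ₘ π) ≤ M' ^ 2 := by
    lift T to ℝ≥0 using hT.le
    have hlip := lipschitzWith_min_sq hf T
    refine le_of_tendsto' (hπ.tendsto_integral_transition hμstar hinv hP
      (hint (hπ.lipschitzWith_stationaryDist hμstar) 0) hlip (hint hlip)) fun n => ?_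
    calc ∫ ω, min (f (transition n ω) ^ 2) T ∂P ≤ ∫ ω, f (transition n ω) ^ 2 ∂P :=
          integral_mono (hint hlip n) (hfL2 n).1.integrable_sq fun ω => min_le_left _ _
      _ ≤ M' ^ 2 := integral_sq_le_of_eLpNorm_two_le (hfL2 n).1.1 (hfL2 n).2
  exact tendsto_integral_min_atTop (integrable_of_integral_min_le
    (hf.continuous.measurable.pow_const 2) (fun _ => sq_nonneg _) htrunc) fun _ => sq_nonneg _

theorem integral_sq_sum_min_sq_transition_le (hπ : HasWassersteinGap π C γ)
    (hμstar : FiniteFirstMoment μstar) (hinv : Pmeas π μstar = μstar)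
    (hP : IsMarkovChainLaw π ν P) {M : ℝ}
    (hV : ∀ n, MemLp (fun ω => stationaryDist π μstar (transition n ω)) 2 P)
    (hVM : ∀ n, ∫ ω, stationaryDist π μstar (transition n ω) ^ 2 ∂P ≤ M)
    (hf : LipschitzWith K f) (T : ℝ≥0) {s : ℕ → ℕ} (hs : StrictMono s) (N : ℕ) :
    ∫ ω, (∑ l ∈ Finset.range N, (min (f (transition (s l) ω) ^ 2) T -
        ∫ p, min (f p ^ 2) T ∂(μstar ⊗ₘ π))) ^ 2 ∂P ≤
      (1 + 2 * ((1 + C * γ) * C) / (1 - γ)) * M * (4 * K ^ 2) * T * N := by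
  have := hμstar.1
  have hlip : LipschitzWith (2 * NNReal.sqrt T * K)
      fun p => min (f p ^ 2) T - ∫ p, min (f p ^ 2) T ∂(μstar ⊗ₘ π) := by
    simpa using (lipschitzWith_min_sq hf T).sub (LipschitzWith.const _)
  have hmean : ∫ p, (min (f p ^ 2) T - ∫ p, min (f p ^ 2) T ∂(μstar ⊗ₘ π)) ∂(μstar ⊗ₘ π) = 0 := by
    simpa only [average_eq_integral] using
      integral_sub_average (μstar ⊗ₘ π) fun p => min (f p ^ 2) (T : ℝ)
  refine (hπ.integral_sq_sum_transition_le hμstar hinv hP hV hVM hlip hmean hs N).trans_eq ?_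
  push_cast
  rw [mul_pow, mul_pow, Real.sq_sqrt T.coe_nonneg]
  ring

theorem ae_tendsto_average_sq_transition (hπ : HasWassersteinGap π C γ)
    (hμstar : FiniteFirstMoment μstar) (hinv : Pmeas π μstar = μstar)
    (hP : IsMarkovChainLaw π ν P) {q M : ℝ≥0} (hq : 2 < q) {x₀ : S}
    (hM : ∀ n, eLpNorm (fun ω => dist x₀ (ω n)) q P ≤ M) (hf : LipschitzWith K f) {s : ℕ → ℕ}
    (hs : StrictMono s) :
    ∀ᵐ ω ∂P, Tendsto (fun n : ℕ => (∑ l ∈ Finset.range n, f (transition (s l) ω) ^ 2) / n) atTop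
      (𝓝 (∫ p, f p ^ 2 ∂(μstar ⊗ₘ π))) := by
  have := hP.prob
  have hM₂ (n : ℕ) : eLpNorm (fun ω : ℕ → S => dist x₀ (ω n)) 2 P ≤ M :=
    (eLpNorm_le_eLpNorm_of_exponent_le (by exact_mod_cast hq.le)
      (measurable_const.dist (measurable_pi_apply n)).aestronglyMeasurable).trans (hM n)
  obtain ⟨V, hV⟩ := exists_memLp_transition one_le_two hM₂ (hπ.lipschitzWith_stationaryDist hμstar)
  obtain ⟨M', hfLq⟩ := exists_memLp_transition (by exact_mod_cast one_le_two.trans hq.le) hM hf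
  refine ae_tendsto_average_of_truncated_variance_le (p := q / 2)
    (A := M' ^ (q : ℝ)) (B := (1 + 2 * ((1 + C * γ) * C) / (1 - γ)) * V ^ 2 * (4 * K ^ 2))
    (fun l => (hfLq (s l)).1.1.pow 2) (fun _ _ => sq_nonneg _) ?_ (fun l T hT => ?_)
    (hπ.tendsto_integral_min_sq_compProd hμstar hinv hP hM₂ hf) fun N T hT => ?_
  · rw [one_lt_div two_pos]
    exact_mod_cast hq
  · exact measureReal_lt_sq_le_of_eLpNorm_le (pos_of_gt hq).ne' (hfLq _).1.1 (hfLq _).2 hT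
  · lift T to ℝ≥0 using hT.le
    exact hπ.integral_sq_sum_min_sq_transition_le hμstar hinv hP (fun n => (hV n).1)
      (fun n => integral_sq_le_of_eLpNorm_two_le (hV n).1.1 (hV n).2) hf T hs N

end HasWassersteinGap

end Transitions

section MartingaleDifferences

variable {S : Type*} [MeasurableSpace S] {π : Kernel S S}

/-- The function `(x, y) ↦ χ(y) - χ(x) + ψ(y)`, whose value at the transition `(X_n, X_{n+1})` is
the martingale difference `Z_{n+1}`. -/
noncomputable def martingaleIncrement (π : Kernel S S) (ψ : S → ℝ) (p : S × S) : ℝ :=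
  chiFun π ψ p.2 - chiFun π ψ p.1 + ψ p.2

theorem ZFun_eq_martingaleIncrement_transition (π : Kernel S S) (ψ : S → ℝ) {n : ℕ} (hn : 1 ≤ n)
    (ω : ℕ → S) : ZFun π ψ n ω = martingaleIncrement π ψ (transition (n - 1) ω) := by
  simp only [ZFun, martingaleIncrement, transition, Nat.sub_add_cancel hn]

variable [MetricSpace S] {ν μstar : Measure S} {P Pstar : Measure (ℕ → S)} {ψ : S → ℝ}

theorem lipschitzWith_martingaleIncrement {K L : ℝ≥0} (hχ : LipschitzWith L (chiFun π ψ))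
    (hψ : LipschitzWith K ψ) : LipschitzWith (L + L + K) (martingaleIncrement π ψ) := by
  have hsum := ((hχ.comp LipschitzWith.prod_snd).sub (hχ.comp LipschitzWith.prod_fst)).add
    (hψ.comp LipschitzWith.prod_snd)
  simp only [mul_one] at hsum
  exact hsum

variable [SecondCountableTopology S] [BorelSpace S]

theorem IsMarkovChainLaw.integral_ZFun_one_sq [IsMarkovKernel π]
    (hP : IsMarkovChainLaw π ν P) (hmeas : Measurable (martingaleIncrement π ψ)) :
    ∫ ω, ZFun π ψ 1 ω ^ 2 ∂P = ∫ p, martingaleIncrement π ψ p ^ 2 ∂(ν ⊗ₘ π) := by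
  rw [← hP.map_transition_zero, integral_map (measurable_transition 0).aemeasurable
    (hmeas.pow_const 2).aestronglyMeasurable]
  simp only [ZFun_eq_martingaleIncrement_transition π ψ le_rfl, Nat.sub_self]

theorem exists_eLpNorm_dist_le {q : ℝ≥0} (hq : q ≠ 0) {x₀ : S}
    (hint : ∀ n, Integrable (fun ω : ℕ → S => dist x₀ (ω n) ^ (q : ℝ)) P)
    (hbdd : ∃ A : ℝ, ∀ n, ∫ ω, dist x₀ (ω n) ^ (q : ℝ) ∂P ≤ A) :
    ∃ M : ℝ≥0, ∀ n, eLpNorm (fun ω => dist x₀ (ω n)) q P ≤ M := by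
  obtain ⟨A, hA⟩ := hbdd
  refine ⟨(A ^ (q⁻¹ : ℝ)).toNNReal, fun n => eLpNorm_le_of_integral_rpow_norm_le hq
    (measurable_const.dist (measurable_pi_apply n)).aestronglyMeasurable ?_ ?_⟩
  · simpa only [Real.norm_of_nonneg dist_nonneg] using hint n
  · simpa only [Real.norm_of_nonneg dist_nonneg] using hA n

theorem convergence_along_arithmetic_subsequences_general [IsMarkovKernel π] {C γ K : ℝ≥0}
    (hπ : HasWassersteinGap π C γ) (hP : IsMarkovChainLaw π ν P) {x₀ : S} {δ : ℝ} (hδ : 0 < δ)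
    (hint : ∀ n, Integrable (fun ω : ℕ → S => dist x₀ (ω n) ^ (2 + δ)) P)
    (hbdd : ∃ A : ℝ, ∀ n, ∫ ω, dist x₀ (ω n) ^ (2 + δ) ∂P ≤ A)
    (hμstar : FiniteFirstMoment μstar) (hinv : Pmeas π μstar = μstar)
    (hψ : LipschitzWith K ψ) (hψ₀ : ∫ x, ψ x ∂μstar = 0)
    (hPstar : IsMarkovChainLaw π μstar Pstar) {t : ℕ → ℕ} (ht : StrictMono t) :
    ∀ᵐ ω ∂P, Tendsto (fun n : ℕ => (1 / (n : ℝ)) * ∑ l ∈ Finset.Icc 1 n, ZFun π ψ (t l) ω ^ 2)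
      atTop (𝓝 (∫ ω, ZFun π ψ 1 ω ^ 2 ∂Pstar)) := by
  lift 2 + δ to ℝ≥0 using by positivity with q hq
  have hq₂ : 2 < q := NNReal.coe_lt_coe.1 (by rw [hq, NNReal.coe_ofNat]; linarith)
  obtain ⟨M, hM⟩ := exists_eLpNorm_dist_le (pos_of_gt hq₂).ne' hint hbdd
  have hg := lipschitzWith_martingaleIncrement (hπ.lipschitzWith_chiFun hψ hμstar hinv hψ₀) hψ
  have hpos (l : ℕ) : 1 ≤ t (l + 1) := l.succ_pos.trans_le (ht.id_le (l + 1))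
  have hs : StrictMono fun l => t (l + 1) - 1 := fun k l hkl =>
    Nat.sub_lt_sub_right (hpos k) (ht (Nat.succ_lt_succ hkl))
  rw [hPstar.integral_ZFun_one_sq hg.continuous.measurable]
  filter_upwards [hπ.ae_tendsto_average_sq_transition hμstar hinv hP hq₂ hM hg hs] with ω hω
  refine hω.congr fun n => ?_
  rw [div_eq_inv_mul, ← one_div, ← Finset.Ico_add_one_right_eq_Icc, Finset.sum_Ico_eq_sum_range]
  simp only [Nat.add_sub_cancel, add_comm 1, ZFun_eq_martingaleIncrement_transition π ψ (hpos _)]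

end MartingaleDifferences

/-- Along arithmetic subsequences of step `n₀`: `(1/n) ∑_{l=1}^n Z_{i+l n₀}² → σ²` a.s. -/
theorem convergence_along_arithmetic_subsequences
    {E : Type*} [MeasurableSpace E] [MetricSpace E] [CompleteSpace E]
    [SecondCountableTopology E] [BorelSpace E]
    (π : Kernel E E) [IsMarkovKernel π] (γ c : ℝ) (hγ : γ ∈ Set.Ioo (0 : ℝ) 1) (hc : 0 < c)
    -- (H0): the Feller property
    (hH0 : ∀ f : E → ℝ, Continuous f → IsBounded (Set.range f) → Continuous (Pfun π f))
    -- (H1): `P` preserves `M_{1,1}`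
    (hH1 : ∀ ν : MeasureTheory.Measure E, FiniteFirstMoment ν → FiniteFirstMoment (Pmeas π ν))
    -- (H2): spectral gap in the Wasserstein metric
    (hH2 : ∀ n : ℕ, 1 ≤ n → ∀ ν₁ ν₂ : MeasureTheory.Measure E, FiniteFirstMoment ν₁ →
      FiniteFirstMoment ν₂ →
      wassDist ((Pmeas π)^[n] ν₁) ((Pmeas π)^[n] ν₂) ≤ c * γ ^ n * wassDist ν₁ ν₂)
    -- the chain: initial distribution `μ ∈ M_{1,1}` and its law `Pμ` on `E^ℕ`
    (μ : MeasureTheory.Measure E) (hμ : FiniteFirstMoment μ)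
    (Pμ : MeasureTheory.Measure (ℕ → E)) (hPμ : IsMarkovChainLaw π μ Pμ)
    -- (H3): uniformly bounded moments of order `2 + δ`
    (x₀ : E) (δ : ℝ) (hδ : 0 < δ)
    (hH3int : ∀ n : ℕ, Integrable (fun ω : ℕ → E => dist x₀ (ω n) ^ (2 + δ)) Pμ)
    (hH3 : ∃ M : ℝ, ∀ n : ℕ, ∫ ω : ℕ → E, dist x₀ (ω n) ^ (2 + δ) ∂Pμ ≤ M)
    -- the unique invariant measure `μ* ∈ M_{1,1}`
    (μstar : MeasureTheory.Measure E) (hμstar : FiniteFirstMoment μstar)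
    (hinv : Pmeas π μstar = μstar)
    (huniq : ∀ ν : MeasureTheory.Measure E, IsProbabilityMeasure ν → Pmeas π ν = ν → ν = μstar)
    -- `ψ` is Lipschitz with `⟨ψ, μ*⟩ = 0`
    (ψ : E → ℝ) (Lψ : ℝ≥0) (hψ : LipschitzWith Lψ ψ) (hψ0 : ∫ x, ψ x ∂μstar = 0)
    -- the law of the stationary chain, used to define `σ² = E_{μ*} Z₁²`
    (Pstar : MeasureTheory.Measure (ℕ → E)) (hPstar : IsMarkovChainLaw π μstar Pstar)
    (n₀ : ℕ) (hn₀ : 2 ≤ n₀) (hγ₀ : c ^ 2 * γ ^ n₀ < 1) :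
    ∀ i : ℕ, 1 ≤ i → i ≤ n₀ →
      ∀ᵐ ω ∂Pμ, Tendsto
        (fun n : ℕ => (1 / (n : ℝ)) * ∑ l ∈ Finset.Icc 1 n, (ZFun π ψ (i + l * n₀) ω) ^ 2)
        atTop (𝓝 (∫ ω', (ZFun π ψ 1 ω') ^ 2 ∂Pstar)) := by
  intro i _ _
  have hmono : StrictMono fun l => i + l * n₀ :=
    (strictMono_mul_right_of_pos (by omega)).const_add i
  exact convergence_along_arithmetic_subsequences_general (.of_pos hγ hc hH1 hH2) hPμ hδ hH3int hH3
    hμstar hinv hψ hψ0 hPstar hmono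
end

section
/- Under hypotheses (H0)–(H3), with n₀ ≥ 2 fixed so that c²γ^{n₀} < 1, for every i ∈ {1,…,n₀} the functions x ↦ E_x(| liminf_{n→∞} (1/n) Σ_{l=1}^n Z_{i+l n₀}² − σ² | ∧ 1) and x ↦ E_x(| limsup_{n→∞} (1/n) Σ_{l=1}^n Z_{i+l n₀}² − σ² | ∧ 1) are Lipschitz continuous on E (in particular continuous). -/
open MeasureTheory ProbabilityTheory Filter Bornology
open scoped ENNReal NNReal Topology

variable {E : Type*} [MeasurableSpace E] [MetricSpace E] [CompleteSpace E]
  [SecondCountableTopology E] [BorelSpace E]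

/-!
Both functions are in fact constant: the law of the `liminf` and of the `limsup` does not depend on
the starting point. By `(H2)`, `P` contracts Lipschitz constants, so `χ` is Lipschitz and
`Z_n = f (X_{n-1}, X_n)` with `f` Lipschitz. Hence `√(∑ Z²)` is Lipschitz in each coordinate of the
path with a constant independent of the number of summands, and since `r ↦ arctan (r²)` is
Lipschitz, `arctan` of the average of `n` of the squares is Lipschitz in each coordinate with
constant `O(1/√n)`.

On the other hand, observe the chain only at the times `i - 1 + l n₀` and `i + l n₀` entering the
average. Integrating out the observed coordinates one after the other, each costing a factor
`C = max 1 c`, shows that a function which is `K`-Lipschitz in each of them has expectations under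
`P_x` and `P_y` that differ by at most `K ρ(x,y) ∑ⱼ C^(j+1) γ^(tⱼ)`, where `tⱼ` is the `j`-th
observation time. This series converges because two observations are made per `n₀` steps and
`C² γ^n₀ < 1`. Truncated suprema of the tail of the averages have the same coordinatewise
constants, so letting `n → ∞` the two laws of the `limsup` coincide.
-/

section RealLimsup

variable {ι : Type*} {F : Filter ι} {u : ι → ℝ}

theorem limsup_neg_eq_neg_liminf (u : ι → ℝ) (F : Filter ι) :
    limsup (fun i => -u i) F = -liminf u F := by
  rw [liminf_eq, limsup_eq, Real.sInf_def]
  congr 2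
  ext a
  simp

theorem limsup_arctan_of_not_isBoundedUnder (hu : ¬F.IsBoundedUnder (· ≤ ·) u) :
    limsup (fun i => Real.arctan (u i)) F = Real.pi / 2 := by
  have hfreq (M : ℝ) : ∃ᶠ i in F, M ≤ u i := fun h =>
    hu (isBoundedUnder_of_eventually_le (a := M) (h.mono fun _ hi => (not_le.1 hi).le))
  have hle (i : ι) : Real.arctan (u i) ≤ Real.pi / 2 := (Real.arctan_lt_pi_div_two _).le
  have hbdd : F.IsBoundedUnder (· ≤ ·) (fun i => Real.arctan (u i)) := isBoundedUnder_of ⟨_, hle⟩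
  have hge (M : ℝ) : Real.arctan M ≤ limsup (fun i => Real.arctan (u i)) F :=
    le_limsup_of_frequently_le ((hfreq M).mono fun _ hi => Real.arctan_mono hi) hbdd
  refine le_antisymm (limsup_le_of_le ?_ (.of_forall hle)) ?_
  · exact .of_frequently_ge ((hfreq 0).mono fun _ hi => Real.arctan_mono hi)
  · exact le_of_tendsto (tendsto_nhds_of_tendsto_nhdsWithin Real.tendsto_arctan_atTop)
      (.of_forall hge)

theorem limsup_arctan_of_not_isCoboundedUnder [F.NeBot] (hu : ¬F.IsCoboundedUnder (· ≤ ·) u) :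
    limsup (fun i => Real.arctan (u i)) F = -(Real.pi / 2) := by
  have hbot : Tendsto u F atBot := tendsto_atBot.2 fun M => by
    by_contra hM
    exact hu (.of_frequently_ge (a := M) ((not_eventually.1 hM).mono fun _ hi => (not_le.1 hi).le))
  exact ((tendsto_nhds_of_tendsto_nhdsWithin Real.tendsto_arctan_atBot).comp hbot).limsup_eq

-- The junk value `0` of a real `limsup` is matched by `Real.tan (±π / 2) = 0`.
theorem tan_limsup_arctan [F.NeBot] (u : ι → ℝ) :
    Real.tan (limsup (fun i => Real.arctan (u i)) F) = limsup u F := by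
  by_cases hbdd : F.IsBoundedUnder (· ≤ ·) u
  · by_cases hcobdd : F.IsCoboundedUnder (· ≤ ·) u
    · have hlimsup := Real.arctan_mono.map_limsup_of_continuousAt u
        Real.continuous_arctan.continuousAt hbdd hcobdd
      rw [Function.comp_def] at hlimsup
      rw [← hlimsup, Real.tan_arctan]
    · rw [limsup_arctan_of_not_isCoboundedUnder hcobdd, Real.tan_neg, Real.tan_pi_div_two,
        neg_zero, Real.limsup_of_not_isCoboundedUnder hcobdd]
  · rw [limsup_arctan_of_not_isBoundedUnder hbdd, Real.tan_pi_div_two,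
      Real.limsup_of_not_isBoundedUnder hbdd]

theorem tan_liminf_arctan [F.NeBot] (u : ι → ℝ) :
    Real.tan (liminf (fun i => Real.arctan (u i)) F) = liminf u F := by
  have h := tan_limsup_arctan (F := F) fun i => -u i
  simp only [Real.arctan_neg, limsup_neg_eq_neg_liminf, Real.tan_neg] at h
  exact neg_injective h

end RealLimsup

theorem lipschitzWith_arctan_sq : LipschitzWith 2 fun r : ℝ => Real.arctan (r ^ 2) := by
  have hderiv (r : ℝ) :
      HasDerivAt (fun r : ℝ => Real.arctan (r ^ 2)) (1 / (1 + (r ^ 2) ^ 2) * (2 * r)) r := by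
    simpa using (hasDerivAt_pow 2 r).arctan
  refine lipschitzWith_of_nnnorm_deriv_le (fun r => (hderiv r).differentiableAt) fun r => ?_
  rw [(hderiv r).deriv, ← NNReal.coe_le_coe, coe_nnnorm, Real.norm_eq_abs, abs_le,
    ← mul_div_right_comm, NNReal.coe_ofNat, le_div_iff₀ (by positivity),
    div_le_iff₀ (by positivity)]
  constructor <;> nlinarith [sq_nonneg (r ^ 2 - 1), sq_nonneg (r - 1), sq_nonneg (r + 1)]

theorem dist_sqrt_sum_sq_le {ι : Type*} (s : Finset ι) (z z' : ι → ℝ) :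
    dist √(∑ l ∈ s, z l ^ 2) √(∑ l ∈ s, z' l ^ 2) ≤ ∑ l ∈ s, dist (z l) (z' l) := by
  have hnorm (v : ι → ℝ) :
      ‖WithLp.toLp 2 fun l : s => v l‖ = √(∑ l ∈ s, v l ^ 2) := by
    simp [EuclideanSpace.norm_eq, Finset.sum_attach s fun l => v l ^ 2]
  calc dist √(∑ l ∈ s, z l ^ 2) √(∑ l ∈ s, z' l ^ 2)
      ≤ ‖WithLp.toLp 2 (fun l : s => z l) - WithLp.toLp 2 fun l : s => z' l‖ := by
        rw [← hnorm, ← hnorm]; exact abs_norm_sub_norm_le _ _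
    _ = √(∑ l ∈ s, dist (z l) (z' l) ^ 2) := by
        rw [← WithLp.toLp_sub]; exact (hnorm fun l => z l - z' l).trans (by simp [Real.dist_eq])
    _ ≤ ∑ l ∈ s, dist (z l) (z' l) :=
        Real.sqrt_le_iff.2 ⟨Finset.sum_nonneg fun _ _ => dist_nonneg,
          Finset.sum_sq_le_sq_sum_of_nonneg fun _ _ => dist_nonneg⟩

theorem identDistrib_of_forall_lipschitz_integral_eq {Ω Ω' Y : Type*} [MeasurableSpace Ω]
    [MeasurableSpace Ω'] [MeasurableSpace Y] [PseudoMetricSpace Y] [BorelSpace Y]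
    {P : Measure Ω} {Q : Measure Ω'} [IsProbabilityMeasure P] [IsProbabilityMeasure Q]
    {V : Ω → Y} {W : Ω' → Y} (hV : AEMeasurable V P) (hW : AEMeasurable W Q)
    (h : ∀ (φ : Y → ℝ) (L : ℝ≥0), (∃ C, ∀ y y', dist (φ y) (φ y') ≤ C) → LipschitzWith L φ →
      ∫ ω, φ (V ω) ∂P = ∫ ω, φ (W ω) ∂Q) :
    IdentDistrib V W P Q := by
  let μ : ProbabilityMeasure Y := ⟨P.map V, Measure.isProbabilityMeasure_map hV⟩
  let ν : ProbabilityMeasure Y := ⟨Q.map W, Measure.isProbabilityMeasure_map hW⟩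
  have hlim : Tendsto (fun _ : ℕ => μ) atTop (𝓝 ν) :=
    tendsto_iff_forall_lipschitz_integral_tendsto.2 fun φ hφ ⟨L, hL⟩ => by
      have hint : ∫ y, φ y ∂(μ : Measure Y) = ∫ y, φ y ∂(ν : Measure Y) := by
        have hφm {R : Measure Y} : AEStronglyMeasurable φ R :=
          hL.continuous.measurable.aestronglyMeasurable
        simpa only [μ, ν, ProbabilityMeasure.coe_mk, integral_map hV hφm, integral_map hW hφm]
          using h φ L hφ hL
      exact hint ▸ tendsto_const_nhds
  refine ⟨hV, hW, ?_⟩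
  have hμν : μ = ν := tendsto_nhds_unique tendsto_const_nhds hlim
  exact congrArg ((↑) : ProbabilityMeasure Y → Measure Y) hμν

theorem dist_integral_le_of_tendsto {Ω : Type*} [MeasurableSpace Ω] {P Q : Measure Ω}
    [IsFiniteMeasure P] [IsFiniteMeasure Q] {F : ℕ → Ω → ℝ} {f : Ω → ℝ} {B C : ℝ}
    (hF : ∀ n, Measurable (F n)) (hB : ∀ n ω, |F n ω| ≤ B)
    (hlim : ∀ ω, Tendsto (fun n => F n ω) atTop (𝓝 (f ω)))
    (hC : ∀ᶠ n in atTop, dist (∫ ω, F n ω ∂P) (∫ ω, F n ω ∂Q) ≤ C) :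
    dist (∫ ω, f ω ∂P) (∫ ω, f ω ∂Q) ≤ C := by
  have hint (μ : Measure Ω) [IsFiniteMeasure μ] :
      Tendsto (fun n => ∫ ω, F n ω ∂μ) atTop (𝓝 (∫ ω, f ω ∂μ)) :=
    tendsto_integral_of_dominated_convergence (fun _ => B)
      (fun n => (hF n).aestronglyMeasurable) (integrable_const B) (fun n => .of_forall (hB n))
      (.of_forall hlim)
  exact le_of_tendsto ((hint P).dist (hint Q)) hC

section CylinderLipschitz

variable {X : Type*} [PseudoMetricSpace X]

/-- `h : (ℕ → X) → ℝ` depends on the first `n` coordinates only, and is Lipschitz in the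
coordinate `j` with constant `w j`. -/
def CoordLipschitz (n : ℕ) (w : ℕ → ℝ≥0) (h : (ℕ → X) → ℝ) : Prop :=
  ∀ a b : ℕ → X, dist (h a) (h b) ≤ ∑ j ∈ Finset.range n, w j * dist (a j) (b j)

/-- `h : (ℕ → X) → ℝ` depends on finitely many coordinates only, and is `K`-Lipschitz in each. -/
def CylinderLipschitz (K : ℝ≥0) (h : (ℕ → X) → ℝ) : Prop :=
  ∃ n, CoordLipschitz n (fun _ => K) h

variable {n m : ℕ} {w w' : ℕ → ℝ≥0} {K L : ℝ≥0} {h h' : (ℕ → X) → ℝ}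

theorem CoordLipschitz.mono (hh : CoordLipschitz n w h) (hnm : n ≤ m) (hw : ∀ j, w j ≤ w' j) :
    CoordLipschitz m w' h := fun a b => (hh a b).trans <| by
  calc ∑ j ∈ Finset.range n, w j * dist (a j) (b j)
      ≤ ∑ j ∈ Finset.range m, w j * dist (a j) (b j) :=
        Finset.sum_le_sum_of_subset_of_nonneg (Finset.range_mono hnm) fun _ _ _ => by positivity
    _ ≤ ∑ j ∈ Finset.range m, w' j * dist (a j) (b j) := by gcongr; exact hw _

theorem CoordLipschitz.apply_eq_of_forall_lt (hh : CoordLipschitz n w h) {a b : ℕ → X}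
    (hab : ∀ j < n, a j = b j) : h a = h b :=
  dist_le_zero.1 <| (hh a b).trans_eq <| Finset.sum_eq_zero fun j hj => by
    rw [hab j (Finset.mem_range.1 hj), dist_self, mul_zero]

theorem CoordLipschitz.continuous (hh : CoordLipschitz n w h) : Continuous h := by
  refine continuous_iff_continuousAt.2 fun b => tendsto_iff_dist_tendsto_zero.2 ?_
  have hlim : Tendsto (fun a : ℕ → X => ∑ j ∈ Finset.range n, w j * dist (a j) (b j)) (𝓝 b)
      (𝓝 (∑ j ∈ Finset.range n, w j * dist (b j) (b j))) :=
    Continuous.tendsto (by fun_prop) b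
  simp only [dist_self, mul_zero, Finset.sum_const_zero] at hlim
  exact squeeze_zero (fun _ => dist_nonneg) (fun a => hh a b) hlim

theorem CylinderLipschitz.mono (hh : CylinderLipschitz K h) (hKL : K ≤ L) :
    CylinderLipschitz L h :=
  hh.imp fun _ hn => hn.mono le_rfl fun _ => hKL

theorem CylinderLipschitz.sup (hh : CylinderLipschitz K h) (hh' : CylinderLipschitz K h') :
    CylinderLipschitz K (h ⊔ h') := by
  obtain ⟨n, hn⟩ := hh
  obtain ⟨m, hm⟩ := hh'
  refine ⟨max n m, fun a b => (abs_max_sub_max_le_max _ _ _ _).trans (max_le ?_ ?_)⟩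
  · exact hn.mono (le_max_left n m) (fun _ => le_rfl) a b
  · exact hm.mono (le_max_right n m) (fun _ => le_rfl) a b

theorem CylinderLipschitz.partialSups {D : ℕ → (ℕ → X) → ℝ}
    (hD : ∀ k, CylinderLipschitz K (D k)) (N : ℕ) : CylinderLipschitz K (partialSups D N) := by
  induction N with
  | zero => simpa using hD 0
  | succ N ih => rw [partialSups_add_one]; exact ih.sup (hD _)

theorem CylinderLipschitz.lipschitz_comp (hh : CylinderLipschitz K h) {φ : ℝ → ℝ}
    (hφ : LipschitzWith L φ) : CylinderLipschitz (L * K) (φ ∘ h) := by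
  obtain ⟨n, hn⟩ := hh
  refine ⟨n, fun a b => (hφ.dist_le_mul _ _).trans ?_⟩
  simpa only [NNReal.coe_mul, mul_assoc, ← Finset.mul_sum] using
    mul_le_mul_of_nonneg_left (hn a b) L.coe_nonneg

theorem CylinderLipschitz.neg (hh : CylinderLipschitz K h) : CylinderLipschitz K (-h) :=
  hh.imp fun _ hn a b => by simpa only [Pi.neg_apply, dist_neg_neg] using hn a b

theorem CylinderLipschitz.continuous (hh : CylinderLipschitz K h) : Continuous h :=
  hh.elim fun _ hn => hn.continuous

end CylinderLipschitz

theorem tendsto_iSup_nat_add_limsup {u : ℕ → ℝ} (habove : BddAbove (Set.range u))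
    (hbelow : BddBelow (Set.range u)) :
    Tendsto (fun m => ⨆ k, u (k + m)) atTop (𝓝 (limsup u atTop)) := by
  have habove' (m : ℕ) : BddAbove (Set.range fun k => u (k + m)) :=
    habove.mono (Set.range_comp_subset_range (· + m) u)
  have hle {m n : ℕ} (hmn : m ≤ n) : u n ≤ ⨆ k, u (k + m) := by
    simpa [hmn] using le_ciSup (habove' m) (n - m)
  have hanti : Antitone fun m => ⨆ k, u (k + m) := fun m n hmn =>
    ciSup_le fun k => hle (hmn.trans (Nat.le_add_left n k))
  have hbelow' : BddBelow (Set.range fun m => ⨆ k, u (k + m)) := by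
    obtain ⟨b, hb⟩ := hbelow
    exact ⟨b, Set.forall_mem_range.2 fun m => (hb (Set.mem_range_self m)).trans (hle le_rfl)⟩
  have hiInf : ⨅ m, ⨆ k, u (k + m) = limsup u atTop := by
    refine le_antisymm (le_limsup_of_le habove.isBoundedUnder_of_range fun a ha => ?_)
      (le_ciInf fun m => ?_)
    · obtain ⟨m, hm⟩ := eventually_atTop.1 ha
      exact (ciInf_le hbelow' m).trans (ciSup_le fun k => hm _ (Nat.le_add_left m k))
    · exact limsup_le_of_le hbelow.isBoundedUnder_of_range.isCoboundedUnder_le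
        (eventually_atTop.2 ⟨m, fun n => hle⟩)
  exact hiInf ▸ tendsto_atTop_ciInf hanti hbelow'

section CylinderClose

variable {X : Type*} [PseudoMetricSpace X] [MeasurableSpace X]

/-- The laws `P` and `Q` on path space differ by at most `K * A` on every bounded cylinder function
which is `K`-Lipschitz in each coordinate. -/
def CylinderClose (A : ℝ) (P Q : Measure (ℕ → X)) : Prop :=
  ∀ ⦃K : ℝ≥0⦄ ⦃h : (ℕ → X) → ℝ⦄, CylinderLipschitz K h → (∃ B, ∀ a, |h a| ≤ B) →
    dist (∫ a, h a ∂P) (∫ a, h a ∂Q) ≤ K * A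

variable [SecondCountableTopology X] [BorelSpace X] {P Q : Measure (ℕ → X)}
  [IsProbabilityMeasure P] [IsProbabilityMeasure Q]
  {A B : ℝ} {K L : ℝ≥0} {D : ℕ → (ℕ → X) → ℝ} {φ : ℝ → ℝ}

theorem abs_lipschitz_comp_le (hφ : LipschitzWith L φ) {r : ℝ} (hr : |r| ≤ B) :
    |φ r| ≤ |φ 0| + L * B := by
  have h := hφ.dist_le_mul r 0
  rw [Real.dist_eq, Real.dist_eq, sub_zero] at h
  have h' := mul_le_mul_of_nonneg_left hr L.coe_nonneg
  linarith [abs_sub_abs_le_abs_sub (φ r) (φ 0)]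

theorem CylinderClose.dist_integral_iSup_le (hPQ : CylinderClose A P Q)
    (hD : ∀ k, CylinderLipschitz K (D k)) (hB : ∀ k a, |D k a| ≤ B) (hφ : LipschitzWith L φ) :
    dist (∫ a, φ (⨆ k, D k a) ∂P) (∫ a, φ (⨆ k, D k a) ∂Q) ≤ L * K * A := by
  have hcyl (N : ℕ) : CylinderLipschitz (L * K) (φ ∘ partialSups D N) :=
    (CylinderLipschitz.partialSups hD N).lipschitz_comp hφ
  have hbound (N : ℕ) (a : ℕ → X) : |(φ ∘ partialSups D N) a| ≤ |φ 0| + L * B := by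
    refine abs_lipschitz_comp_le hφ (abs_le.2 ⟨?_, ?_⟩)
    · exact (neg_le_of_abs_le (hB 0 a)).trans (le_partialSups_of_le D (Nat.zero_le N) a)
    · exact partialSups_le D N (fun _ => B) (fun k _ b => le_of_abs_le (hB k b)) a
  refine dist_integral_le_of_tendsto (fun N => (hcyl N).continuous.measurable) hbound
    (fun a => (hφ.continuous.tendsto _).comp ?_) (.of_forall fun N => ?_)
  · have habove : BddAbove (Set.range fun k => D k a) :=
      ⟨B, Set.forall_mem_range.2 fun k => le_of_abs_le (hB k a)⟩
    simp only [Pi.partialSups_apply]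
    rw [← ciSup_partialSups_eq habove]
    exact tendsto_atTop_ciSup (partialSups_monotone _) (bddAbove_range_partialSups.2 habove)
  · exact hPQ (hcyl N) ⟨_, hbound N⟩

theorem CylinderClose.dist_integral_limsup_le (hPQ : CylinderClose A P Q)
    (hD : ∀ᶠ n in atTop, CylinderLipschitz K (D n)) (hDm : ∀ n, Measurable (D n))
    (hB : ∀ n a, |D n a| ≤ B) (hφ : LipschitzWith L φ) :
    dist (∫ a, φ (limsup (fun n => D n a) atTop) ∂P)
      (∫ a, φ (limsup (fun n => D n a) atTop) ∂Q) ≤ L * K * A := by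
  have habove (a : ℕ → X) : BddAbove (Set.range fun n => D n a) :=
    ⟨B, Set.forall_mem_range.2 fun n => le_of_abs_le (hB n a)⟩
  have hbelow (a : ℕ → X) : BddBelow (Set.range fun n => D n a) :=
    ⟨-B, Set.forall_mem_range.2 fun n => neg_le_of_abs_le (hB n a)⟩
  refine dist_integral_le_of_tendsto (F := fun m a => φ (⨆ k, D (k + m) a))
    (fun m => hφ.continuous.measurable.comp (.iSup fun k => hDm (k + m)))
    (fun m a => abs_lipschitz_comp_le (B := B) hφ ?_)
    (fun a => (hφ.continuous.tendsto _).comp (tendsto_iSup_nat_add_limsup (habove a) (hbelow a)))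
    ?_
  · have habove' : BddAbove (Set.range fun k => D (k + m) a) :=
      (habove a).mono (Set.range_comp_subset_range (· + m) fun n => D n a)
    exact abs_le.2 ⟨(neg_le_of_abs_le (hB (0 + m) a)).trans (le_ciSup habove' 0),
      ciSup_le fun k => le_of_abs_le (hB (k + m) a)⟩
  · obtain ⟨m₀, hm₀⟩ := eventually_atTop.1 hD
    filter_upwards [eventually_ge_atTop m₀] with m hm
    exact hPQ.dist_integral_iSup_le (fun k => hm₀ _ (hm.trans (Nat.le_add_left m k)))
      (fun k => hB (k + m)) hφ

theorem CylinderClose.identDistrib_limsup (hPQ : CylinderClose A P Q)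
    (hD : ∀ ε > 0, ∀ᶠ n in atTop, CylinderLipschitz ε (D n)) (hDm : ∀ n, Measurable (D n))
    (hB : ∀ n a, |D n a| ≤ B) :
    IdentDistrib (fun a => limsup (fun n => D n a) atTop) (fun a => limsup (fun n => D n a) atTop)
      P Q := by
  have hm : Measurable fun a => limsup (fun n => D n a) atTop := .limsup hDm
  refine identDistrib_of_forall_lipschitz_integral_eq hm.aemeasurable hm.aemeasurable
    fun φ L _ hφ => dist_le_zero.1 ?_
  have hle : ∀ᶠ ε : ℝ≥0 in 𝓝[>] 0, dist (∫ a, φ (limsup (fun n => D n a) atTop) ∂P)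
      (∫ a, φ (limsup (fun n => D n a) atTop) ∂Q) ≤ L * ε * A := by
    filter_upwards [self_mem_nhdsWithin] with ε hε
    exact hPQ.dist_integral_limsup_le (hD ε hε) hDm hB hφ
  have hlim : Tendsto (fun ε : ℝ≥0 => (L * ε * A : ℝ)) (𝓝[>] 0) (𝓝 (L * (0 : ℝ≥0) * A)) :=
    (Continuous.tendsto (by fun_prop) _).mono_left nhdsWithin_le_nhds
  simpa using ge_of_tendsto hlim hle

theorem CylinderClose.identDistrib_liminf (hPQ : CylinderClose A P Q)
    (hD : ∀ ε > 0, ∀ᶠ n in atTop, CylinderLipschitz ε (D n)) (hDm : ∀ n, Measurable (D n))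
    (hB : ∀ n a, |D n a| ≤ B) :
    IdentDistrib (fun a => liminf (fun n => D n a) atTop) (fun a => liminf (fun n => D n a) atTop)
      P Q := by
  have h := (hPQ.identDistrib_limsup (D := fun n => -D n)
    (fun ε hε => (hD ε hε).mono fun n hn => hn.neg) (fun n => (hDm n).neg)
    fun n a => (abs_neg _).trans_le (hB n a)).comp measurable_neg
  simpa only [Function.comp_def, Pi.neg_apply, limsup_neg_eq_neg_liminf, neg_neg] using h

end CylinderClose

section KernelPower

variable {X : Type*} [MeasurableSpace X] {π : Kernel X X}

instance isMarkovKernel_pow [IsMarkovKernel π] (k : ℕ) : IsMarkovKernel (π ^ k) := by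
  induction k with
  | zero => exact inferInstanceAs (IsMarkovKernel Kernel.id)
  | succ k ih => rw [pow_succ]; exact inferInstanceAs (IsMarkovKernel ((π ^ k) ∘ₖ π))

theorem Pmeas_iterate (k : ℕ) (ν : Measure X) : (Pmeas π)^[k] ν = (π ^ k) ∘ₘ ν := by
  induction k generalizing ν with
  | zero => exact Measure.id_comp.symm
  | succ k ih => rw [Function.iterate_succ_apply, ih, pow_succ]; exact Measure.comp_assoc

theorem Pmeas_iterate_dirac (k : ℕ) (x : X) : (Pmeas π)^[k] (Measure.dirac x) = (π ^ k) x := by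
  rw [Pmeas_iterate, Measure.dirac_bind (π ^ k).measurable]

theorem Pfun_iterate_apply [MeasurableSingletonClass X] {f : X → ℝ}
    (hf : ∀ k x, Integrable f ((π ^ k) x)) (k : ℕ) (x : X) :
    (Pfun π)^[k] f x = ∫ y, f y ∂(π ^ k) x := by
  induction k generalizing x with
  | zero => exact (integral_dirac f x).symm
  | succ k ih =>
    have hcomp : π ^ (k + 1) = (π ^ k) ∘ₖ π := pow_succ π k
    rw [Function.iterate_succ_apply', hcomp, Kernel.integral_comp (hcomp ▸ hf (k + 1) x), Pfun]
    simp only [ih]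

end KernelPower

section Wasserstein

variable {X : Type*} [MeasurableSpace X] [MetricSpace X] {f : X → ℝ} {L : ℝ≥0}

theorem finiteFirstMoment_dirac [BorelSpace X] (x : X) : FiniteFirstMoment (Measure.dirac x) :=
  ⟨inferInstance, x, integrable_dirac (by simp)⟩

theorem FiniteFirstMoment.iterate {π : Kernel X X}
    (hH1 : ∀ ν : Measure X, FiniteFirstMoment ν → FiniteFirstMoment (Pmeas π ν)) {ν : Measure X}
    (hν : FiniteFirstMoment ν) (k : ℕ) : FiniteFirstMoment ((Pmeas π)^[k] ν) := by
  induction k with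
  | zero => exact hν
  | succ k ih => rw [Function.iterate_succ_apply']; exact hH1 _ ih

variable [OpensMeasurableSpace X] {ν ν₁ ν₂ : Measure X}

theorem FiniteFirstMoment.integrable_of_lipschitz_s13 (hν : FiniteFirstMoment ν)
    (hf : LipschitzWith L f) : Integrable f ν := by
  obtain ⟨_, x₀, hx₀⟩ := hν
  refine ((integrable_const |f x₀|).add (hx₀.const_mul (L : ℝ))).mono'
    hf.continuous.measurable.aestronglyMeasurable (.of_forall fun x => ?_)
  have hle := hf.dist_le_mul x x₀
  rw [Real.dist_eq, dist_comm] at hle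
  have habs := abs_sub_abs_le_abs_sub (f x) (f x₀)
  simp only [Pi.add_apply, Real.norm_eq_abs]
  linarith

theorem FiniteFirstMoment.dist_integral_apply_le (hν : FiniteFirstMoment ν)
    (hf : LipschitzWith L f) (x : X) : dist (∫ y, f y ∂ν) (f x) ≤ L * ∫ y, dist x y ∂ν := by
  have := hν.1
  have hfint := hν.integrable_of_lipschitz_s13 hf
  calc dist (∫ y, f y ∂ν) (f x) = |∫ y, (f y - f x) ∂ν| := by
        rw [integral_sub hfint (integrable_const _)]; simp [Real.dist_eq]
    _ ≤ ∫ y, |f y - f x| ∂ν := abs_integral_le_integral_abs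
    _ ≤ ∫ y, L * dist x y ∂ν :=
        integral_mono (hfint.sub (integrable_const _)).abs
          ((hν.integrable_of_lipschitz_s13 (LipschitzWith.dist_right x)).const_mul _)
          fun y => dist_comm x y ▸ hf.dist_le_mul y x
    _ = L * ∫ y, dist x y ∂ν := integral_const_mul _ _

theorem bddAbove_wassDist_set (h₁ : FiniteFirstMoment ν₁) (h₂ : FiniteFirstMoment ν₂) :
    BddAbove {r : ℝ | ∃ f : X → ℝ, LipschitzWith 1 f ∧ r = |∫ x, f x ∂ν₁ - ∫ x, f x ∂ν₂|} := by
  obtain ⟨x₀, -⟩ := h₁.2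
  refine ⟨∫ y, dist x₀ y ∂ν₁ + ∫ y, dist x₀ y ∂ν₂, ?_⟩
  rintro _ ⟨f, hf, rfl⟩
  have hle₁ := h₁.dist_integral_apply_le hf x₀
  have hle₂ := h₂.dist_integral_apply_le hf x₀
  rw [NNReal.coe_one, one_mul] at hle₁ hle₂
  exact (dist_triangle_right _ _ _).trans (add_le_add hle₁ hle₂)

theorem dist_integral_le_mul_wassDist (h₁ : FiniteFirstMoment ν₁) (h₂ : FiniteFirstMoment ν₂)
    (hf : LipschitzWith L f) :
    dist (∫ x, f x ∂ν₁) (∫ x, f x ∂ν₂) ≤ L * wassDist ν₁ ν₂ := by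
  obtain ⟨x₀, -⟩ := h₁.2
  have := h₁.1
  have := h₂.1
  rcases eq_zero_or_pos L with rfl | hL
  · have hconst (x : X) : f x = f x₀ := by simpa using hf.dist_le_mul x x₀
    simp [hconst]
  · have hscaled : LipschitzWith 1 fun x => (L : ℝ)⁻¹ * f x := by
      refine LipschitzWith.of_dist_le_mul fun x y => ?_
      rw [Real.dist_eq, ← mul_sub, abs_mul, abs_of_pos (by positivity),
        inv_mul_le_iff₀ (by positivity)]
      simpa [Real.dist_eq] using hf.dist_le_mul x y
    have hle := le_csSup (bddAbove_wassDist_set h₁ h₂) ⟨_, hscaled, rfl⟩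
    rwa [integral_const_mul, integral_const_mul, ← mul_sub, abs_mul, abs_of_pos (by positivity),
      inv_mul_le_iff₀ (by positivity)] at hle

theorem wassDist_dirac_le (x y : X) : wassDist (Measure.dirac x) (Measure.dirac y) ≤ dist x y := by
  refine csSup_le ⟨_, fun _ => 0, .const' 0, rfl⟩ ?_
  rintro _ ⟨f, hf, rfl⟩
  have hfm : StronglyMeasurable f := hf.continuous.measurable.stronglyMeasurable
  rw [integral_dirac' _ _ hfm, integral_dirac' _ _ hfm]
  simpa [Real.dist_eq] using hf.dist_le_mul x y

end Wasserstein

section LipschitzContraction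

variable {X : Type*} [MeasurableSpace X] [MetricSpace X] {π : Kernel X X} {C γ : ℝ≥0}

/-- The `k`-step operator of `π` multiplies Lipschitz constants by at most `C * γ ^ k`. This is the
dual form of the geometric contraction `(H2)` of the Wasserstein distance; it includes `k = 0`. -/
def LipschitzContraction (π : Kernel X X) (C γ : ℝ≥0) : Prop :=
  ∀ (k : ℕ) ⦃L : ℝ≥0⦄ ⦃f : X → ℝ⦄, LipschitzWith L f →
    LipschitzWith (C * γ ^ k * L) fun x => ∫ y, f y ∂(π ^ k) x

variable [BorelSpace X]

theorem lipschitzContraction_of_wassDist {c : ℝ≥0}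
    (hH1 : ∀ ν : Measure X, FiniteFirstMoment ν → FiniteFirstMoment (Pmeas π ν))
    (hH2 : ∀ n : ℕ, 1 ≤ n → ∀ ν₁ ν₂ : Measure X, FiniteFirstMoment ν₁ → FiniteFirstMoment ν₂ →
      wassDist ((Pmeas π)^[n] ν₁) ((Pmeas π)^[n] ν₂) ≤ c * γ ^ n * wassDist ν₁ ν₂) :
    LipschitzContraction π (max 1 c) γ := by
  intro k L f hf
  refine LipschitzWith.of_dist_le_mul fun x y => ?_
  have hδ := finiteFirstMoment_dirac (X := X)
  have hwass : wassDist ((Pmeas π)^[k] (.dirac x)) ((Pmeas π)^[k] (.dirac y)) ≤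
      max 1 c * γ ^ k * dist x y := by
    rcases Nat.eq_zero_or_pos k with rfl | hk
    · refine (wassDist_dirac_le x y).trans ?_
      simpa using le_mul_of_one_le_left dist_nonneg (le_max_left (1 : ℝ) c)
    · refine (hH2 k hk _ _ (hδ x) (hδ y)).trans ?_
      calc c * γ ^ k * wassDist (.dirac x) (.dirac y) ≤ c * γ ^ k * dist x y := by
            gcongr; exact wassDist_dirac_le x y
        _ ≤ max 1 c * γ ^ k * dist x y := by gcongr; exact le_max_right _ _
  rw [← Pmeas_iterate_dirac, ← Pmeas_iterate_dirac]
  calc dist _ _ ≤ L * wassDist ((Pmeas π)^[k] (.dirac x)) ((Pmeas π)^[k] (.dirac y)) :=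
        dist_integral_le_mul_wassDist ((hδ x).iterate hH1 k) ((hδ y).iterate hH1 k) hf
    _ ≤ L * (max 1 c * γ ^ k * dist x y) := by gcongr
    _ = _ := by push_cast; ring

theorem LipschitzContraction.summable_Pfun_iterate (hπ : LipschitzContraction π C γ) (hγ : γ < 1)
    {μ : Measure X} (hμ : FiniteFirstMoment μ) (hinv : Pmeas π μ = μ) {ψ : X → ℝ} {L : ℝ≥0}
    (hψ : LipschitzWith L ψ) (hψint : ∀ k x, Integrable ψ ((π ^ k) x)) (hψ0 : ∫ x, ψ x ∂μ = 0)
    (x : X) : Summable fun k => (Pfun π)^[k] ψ x := by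
  have hmean (k : ℕ) : ∫ y, ∫ z, ψ z ∂(π ^ k) y ∂μ = 0 := by
    have hinvk : (π ^ k) ∘ₘ μ = μ := (Pmeas_iterate k μ).symm.trans (Function.iterate_fixed hinv k)
    have hint := hμ.integrable_of_lipschitz_s13 hψ
    rw [← hinvk, Measure.comp_eq_comp_const_apply] at hint
    have h := Kernel.integral_comp hint
    rwa [← Measure.comp_eq_comp_const_apply, hinvk, hψ0, Kernel.const_apply, eq_comm] at h
  have hgeom : Summable fun k => C * (γ : ℝ) ^ k * L * ∫ y, dist x y ∂μ :=
    (((summable_geometric_of_lt_one γ.2 hγ).mul_left _).mul_right _).mul_right _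
  refine hgeom.of_norm_bounded fun k => ?_
  have hle := hμ.dist_integral_apply_le (hπ k hψ) x
  rwa [hmean, ← Pfun_iterate_apply hψint, dist_zero_left] at hle

theorem LipschitzContraction.lipschitzWith_chiFun (hπ : LipschitzContraction π C γ) (hγ : γ < 1)
    {ψ : X → ℝ} {L : ℝ≥0} (hψ : LipschitzWith L ψ)
    (hψint : ∀ k x, Integrable ψ ((π ^ k) x)) (hsum : ∀ x, Summable fun k => (Pfun π)^[k] ψ x) :
    LipschitzWith (∑' k, C * γ ^ k * L) (chiFun π ψ) := by
  have hgeom : Summable fun k => C * γ ^ k * L :=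
    ((NNReal.summable_geometric hγ).mul_left _).mul_right _
  refine LipschitzWith.of_dist_le_mul fun x y => ?_
  rw [chiFun, chiFun, dist_eq_norm, ← (hsum x).tsum_sub (hsum y), NNReal.coe_tsum]
  refine tsum_of_norm_bounded ((NNReal.summable_coe.2 hgeom).hasSum.mul_right _) fun k => ?_
  rw [Pfun_iterate_apply hψint, Pfun_iterate_apply hψint, ← dist_eq_norm]
  exact (hπ k hψ).dist_le_mul x y

end LipschitzContraction

section Markov

variable {X : Type*} [MeasurableSpace X] [MetricSpace X] [SecondCountableTopology X] [BorelSpace X]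
  {π : Kernel X X} {ν : Measure X} {P : Measure (ℕ → X)}

theorem measurable_natFilt_comp_min (n : ℕ) :
    Measurable[natFilt n] fun (ω : ℕ → X) j => ω (min j n) := by
  refine @measurable_pi_lambda _ _ _ (natFilt n) _ _ fun j => ?_
  have hj := (Filtration.stronglyAdapted_natural fun k =>
    (measurable_pi_apply (X := fun _ => X) k).stronglyMeasurable) (min j n)
  exact (hj.mono (natFilt.mono (min_le_right j n))).measurable

namespace IsMarkovChainLaw

theorem measureReal_inter_preimage_add_one (hP : IsMarkovChainLaw π ν P) (n : ℕ) {A : Set (ℕ → X)}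
    (hA : MeasurableSet[natFilt n] A) {B : Set X} (hB : MeasurableSet B) :
    P.real (A ∩ (fun ω => ω (n + 1)) ⁻¹' B) = ∫ ω in A, (π (ω n)).real B ∂P := by
  have := hP.prob
  let ind : X → ℝ := B.indicator 1
  have hind : Measurable ind := measurable_one.indicator hB
  have hpre : MeasurableSet ((fun ω : ℕ → X => ω (n + 1)) ⁻¹' B) := measurable_pi_apply _ hB
  have hbdd : IsBounded (Set.range ind) := (Metric.isBounded_Icc (0 : ℝ) 1).subset <|
    Set.range_subset_iff.2 fun x =>
      ⟨Set.indicator_nonneg (fun _ _ => zero_le_one) x, Set.indicator_le_self' (by simp) x⟩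
  have hint : Integrable (fun ω : ℕ → X => ind (ω (n + 1))) P :=
    (integrable_const (1 : ℝ)).indicator hpre
  calc P.real (A ∩ (fun ω => ω (n + 1)) ⁻¹' B)
      = ∫ ω in A, ind (ω (n + 1)) ∂P := by
        rw [Set.inter_comm, ← measureReal_restrict_apply hpre, ← integral_indicator_one hpre]
        rfl
    _ = ∫ ω in A, (P[fun ω => ind (ω (n + 1)) | natFilt n]) ω ∂P :=
        (setIntegral_condExp (natFilt.le n) hint hA).symm
    _ = ∫ ω in A, (π (ω n)).real B ∂P := by
        refine integral_congr_ae (ae_restrict_of_ae ?_)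
        filter_upwards [hP.markov n ind hind hbdd] with ω hω
        rw [hω, integral_indicator_one hB]

variable [IsMarkovKernel π]

theorem map_restrict_apply_add_one (hP : IsMarkovChainLaw π ν P) (n : ℕ) {A : Set (ℕ → X)}
    (hA : MeasurableSet[natFilt n] A) :
    (P.restrict A).map (fun ω => ω (n + 1)) = π ∘ₘ (P.restrict A).map fun ω => ω n := by
  have := hP.prob
  ext B hB
  have hπB : Measurable fun ω : ℕ → X => π (ω n) B :=
    (π.measurable_coe hB).comp (measurable_pi_apply n)
  have hlt : ∫⁻ ω in A, π (ω n) B ∂P < ∞ :=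
    (lintegral_mono fun ω => prob_le_one).trans_lt (by simp)
  rw [Measure.map_apply (measurable_pi_apply _) hB, Measure.bind_apply hB π.aemeasurable,
    lintegral_map (π.measurable_coe hB) (measurable_pi_apply n),
    Measure.restrict_apply (measurable_pi_apply _ hB), Set.inter_comm,
    ← ENNReal.toReal_eq_toReal_iff' (measure_ne_top _ _) hlt.ne,
    ← integral_toReal hπB.aemeasurable (.of_forall fun ω => measure_lt_top _ _)]
  exact hP.measureReal_inter_preimage_add_one n hA hB

theorem map_restrict_apply_add (hP : IsMarkovChainLaw π ν P) (n k : ℕ) {A : Set (ℕ → X)}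
    (hA : MeasurableSet[natFilt n] A) :
    (P.restrict A).map (fun ω => ω (n + k)) = (π ^ k) ∘ₘ (P.restrict A).map fun ω => ω n := by
  induction k with
  | zero => exact Measure.id_comp.symm
  | succ k ih =>
    have hA' : MeasurableSet[natFilt (n + k)] A := natFilt.mono (Nat.le_add_right n k) _ hA
    have hstep := hP.map_restrict_apply_add_one (n + k) hA'
    rw [ih, Measure.comp_assoc] at hstep
    rw [pow_succ']
    exact hstep

theorem map_apply_eq_comp (hP : IsMarkovChainLaw π ν P) (k : ℕ) :
    P.map (fun ω => ω k) = (π ^ k) ∘ₘ ν := by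
  simpa [hP.init] using hP.map_restrict_apply_add 0 k MeasurableSet.univ

theorem map_past_prodMk_apply_add (hP : IsMarkovChainLaw π ν P) (n k : ℕ) :
    P.map (fun ω => ((fun j => ω (min j n) : ℕ → X), ω (n + k))) =
      P.map (fun ω j => ω (min j n)) ⊗ₘ
        (π ^ k).comap (fun a : ℕ → X => a n) (measurable_pi_apply n) := by
  have := hP.prob
  have hpast : Measurable fun (ω : ℕ → X) j => ω (min j n) :=
    (measurable_natFilt_comp_min n).mono (natFilt.le n) le_rfl
  refine Measure.ext_prod fun {A B} hA hB => ?_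
  rw [Measure.map_apply (hpast.prodMk (measurable_pi_apply _)) (hA.prod hB),
    Measure.compProd_apply_prod hA hB, Measure.restrict_map hpast hA,
    lintegral_map (Kernel.measurable_coe _ hB) hpast, Set.mk_preimage_prod, Set.inter_comm,
    ← Measure.restrict_apply (measurable_pi_apply _ hB),
    ← Measure.map_apply (measurable_pi_apply _) hB,
    hP.map_restrict_apply_add n k (measurable_natFilt_comp_min n hA),
    Measure.bind_apply hB (π ^ k).aemeasurable,
    lintegral_map ((π ^ k).measurable_coe hB) (measurable_pi_apply n)]
  simp only [Kernel.comap_apply, min_self]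

theorem integral_past_apply_add (hP : IsMarkovChainLaw π ν P) (n k : ℕ) {f : (ℕ → X) × X → ℝ}
    (hf : Measurable f) {B : ℝ} (hB : ∀ p, |f p| ≤ B) :
    ∫ ω, f (fun j => ω (min j n), ω (n + k)) ∂P =
      ∫ ω, ∫ y, f (fun j => ω (min j n), y) ∂(π ^ k) (ω n) ∂P := by
  have := hP.prob
  have hpast : Measurable fun (ω : ℕ → X) j => ω (min j n) :=
    (measurable_natFilt_comp_min n).mono (natFilt.le n) le_rfl
  have := Measure.isProbabilityMeasure_map (μ := P) hpast.aemeasurable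
  rw [← integral_map (hpast.prodMk (measurable_pi_apply _)).aemeasurable hf.aestronglyMeasurable,
    hP.map_past_prodMk_apply_add n k, Measure.integral_compProd
      (.of_bound hf.aestronglyMeasurable B (.of_forall hB)), integral_map hpast.aemeasurable]
  · simp only [Kernel.comap_apply, min_self]
  · exact hf.stronglyMeasurable.integral_kernel_prod_right'.aestronglyMeasurable

end IsMarkovChainLaw

end Markov

theorem sum_add_single_mul (w : ℕ → ℝ≥0) (r : ℝ≥0) (d : ℕ → ℝ) (n : ℕ) :
    ∑ j ∈ Finset.range (n + 1), ((w + Pi.single n r : ℕ → ℝ≥0) j : ℝ) * d j =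
      ∑ j ∈ Finset.range (n + 1), w j * d j + r * d n := by
  have hsingle : ∑ j ∈ Finset.range (n + 1), ((Pi.single n r : ℕ → ℝ≥0) j : ℝ) * d j = r * d n := by
    rw [Finset.sum_eq_single_of_mem n (Finset.self_mem_range_succ n) fun j _ hj => by simp [hj],
      Pi.single_eq_same]
  simp only [Pi.add_apply, NNReal.coe_add, add_mul, Finset.sum_add_distrib, hsingle]

section IntegrateNext

variable {X : Type*} [MeasurableSpace X] {κ : Kernel X X} {n : ℕ}
  {h : (ℕ → X) → ℝ} {B : ℝ}

/-- Integrate out the coordinate `n + 1` of `h` against `κ`, started from the coordinate `n`. This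
is the conditional expectation of `h` given the coordinates `0, …, n`, when `κ` is the transition
kernel from `n` to `n + 1` and `h` does not depend on the coordinates beyond `n + 1`. -/
noncomputable def integrateNext (κ : Kernel X X) (n : ℕ) (h : (ℕ → X) → ℝ) (a : ℕ → X) : ℝ :=
  ∫ y, h (Function.update a (n + 1) y) ∂κ (a n)

theorem abs_integrateNext_le [IsMarkovKernel κ] (hB : ∀ a, |h a| ≤ B) (a : ℕ → X) :
    |integrateNext κ n h a| ≤ B := by
  simpa [integrateNext] using norm_integral_le_of_norm_le_const (μ := κ (a n))
    (f := fun y => h (Function.update a (n + 1) y)) (.of_forall fun y => hB _)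

end IntegrateNext

section CoordLipschitzUpdate

variable {X : Type*} [PseudoMetricSpace X] {n : ℕ} {w : ℕ → ℝ≥0} {h : (ℕ → X) → ℝ}

theorem CoordLipschitz.lipschitzWith_update (hh : CoordLipschitz n w h) (a : ℕ → X) (j : ℕ) :
    LipschitzWith (w j) fun y => h (Function.update a j y) := by
  refine LipschitzWith.of_dist_le_mul fun x y => (hh _ _).trans ?_
  have hne {i : ℕ} (hi : i ≠ j) :
      w i * dist (Function.update a j x i) (Function.update a j y i) = 0 := by simp [hi]
  by_cases hj : j ∈ Finset.range n
  · rw [Finset.sum_eq_single_of_mem j hj fun i _ => hne]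
    simp
  · rw [Finset.sum_eq_zero fun i hi => hne (ne_of_mem_of_not_mem hi hj)]
    positivity

theorem CoordLipschitz.dist_update_le (hh : CoordLipschitz (n + 1) w h) (a b : ℕ → X) (y : X) :
    dist (h (Function.update a n y)) (h (Function.update b n y)) ≤
      ∑ j ∈ Finset.range n, w j * dist (a j) (b j) := by
  refine (hh _ _).trans_eq ?_
  rw [Finset.sum_range_succ, Function.update_self, Function.update_self, dist_self, mul_zero,
    add_zero]
  refine Finset.sum_congr rfl fun j hj => ?_
  have hne : j ≠ n := (Finset.mem_range.1 hj).ne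
  rw [Function.update_of_ne hne, Function.update_of_ne hne]

end CoordLipschitzUpdate

section SampledChain

variable {X : Type*} [MeasurableSpace X] [MetricSpace X] [BorelSpace X] {n : ℕ} {w : ℕ → ℝ≥0}
  {h : (ℕ → X) → ℝ} {B : ℝ}

theorem CoordLipschitz.lipschitz_integrateNext {κ : Kernel X X} [IsMarkovKernel κ] {q : ℝ≥0}
    (hκ : ∀ ⦃L : ℝ≥0⦄ ⦃f : X → ℝ⦄, LipschitzWith L f →
      LipschitzWith (q * L) fun x => ∫ y, f y ∂κ x)
    (hh : CoordLipschitz (n + 2) w h) (hB : ∀ a, |h a| ≤ B) :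
    CoordLipschitz (n + 1) (w + Pi.single n (q * w (n + 1))) (integrateNext κ n h) := by
  intro a b
  have hlip (c : ℕ → X) := hh.lipschitzWith_update c (n + 1)
  have hint (c : ℕ → X) : Integrable (fun y => h (Function.update c (n + 1) y)) (κ (a n)) :=
    .of_bound (hlip c).continuous.measurable.aestronglyMeasurable B (.of_forall fun y => hB _)
  have hkernel : dist (∫ y, h (Function.update b (n + 1) y) ∂κ (a n))
      (integrateNext κ n h b) ≤ q * w (n + 1) * dist (a n) (b n) := by
    exact_mod_cast (hκ (hlip b)).dist_le_mul (a n) (b n)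
  have hfun : dist (integrateNext κ n h a) (∫ y, h (Function.update b (n + 1) y) ∂κ (a n)) ≤
      ∑ j ∈ Finset.range (n + 1), w j * dist (a j) (b j) := by
    rw [integrateNext, Real.dist_eq, ← integral_sub (hint a) (hint b)]
    simpa using norm_integral_le_of_norm_le_const (μ := κ (a n))
      (f := fun y => h (Function.update a (n + 1) y) - h (Function.update b (n + 1) y))
      (.of_forall fun y => hh.dist_update_le a b y)
  calc _ ≤ _ := dist_triangle _ _ _
    _ ≤ _ := add_le_add hfun hkernel
    _ = _ := by rw [sum_add_single_mul, NNReal.coe_mul]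

variable [SecondCountableTopology X] {π : Kernel X X} [IsMarkovKernel π] {P : Measure (ℕ → X)}
  {t : ℕ → ℕ} {C γ : ℝ≥0}

theorem IsMarkovChainLaw.integral_sampled_eq {ν : Measure X} (hP : IsMarkovChainLaw π ν P)
    (ht : Monotone t) (hh : CoordLipschitz (n + 2) w h) (hB : ∀ a, |h a| ≤ B) :
    ∫ ω, h (ω ∘ t) ∂P = ∫ ω, integrateNext (π ^ (t (n + 1) - t n)) n h (ω ∘ t) ∂P := by
  have hmeas : Measurable fun p : (ℕ → X) × X => h (Function.update (p.1 ∘ t) (n + 1) p.2) := by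
    refine hh.continuous.measurable.comp (measurable_pi_lambda _ fun j => ?_)
    rcases eq_or_ne j (n + 1) with rfl | hj
    · simpa using measurable_snd
    · simp only [Function.update_of_ne hj, Function.comp_apply]
      fun_prop
  have hpast (ω : ℕ → X) (y : X) : h (Function.update ((fun j => ω (min j (t n))) ∘ t) (n + 1) y) =
      h (Function.update (ω ∘ t) (n + 1) y) := by
    refine hh.apply_eq_of_forall_lt fun j hj => ?_
    rcases eq_or_ne j (n + 1) with rfl | hne
    · simp
    · simp [hne, ht (show j ≤ n by omega)]
  have hmarkov := hP.integral_past_apply_add (t n) (t (n + 1) - t n) hmeas fun _ => hB _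
  simp only [hpast, Nat.add_sub_of_le (ht n.le_succ)] at hmarkov
  have hself (ω : ℕ → X) : Function.update (ω ∘ t) (n + 1) (ω (t (n + 1))) = ω ∘ t :=
    Function.update_eq_self (n + 1) (ω ∘ t)
  simp only [hself] at hmarkov
  exact hmarkov

theorem integral_sampled_zero {x : X} (hP : IsMarkovChainLaw π (Measure.dirac x) P)
    (hh : CoordLipschitz 1 w h) :
    ∫ ω, h (ω ∘ t) ∂P = ∫ y, h (fun _ => y) ∂(π ^ t 0) x := by
  have hconst (ω : ℕ → X) : h (ω ∘ t) = h fun _ => ω (t 0) :=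
    hh.apply_eq_of_forall_lt fun j hj => by rw [Nat.lt_one_iff.1 hj, Function.comp_apply]
  have hmeas : Measurable fun y : X => h fun _ => y :=
    hh.continuous.measurable.comp (measurable_pi_lambda _ fun _ => measurable_id)
  rw [← Measure.dirac_bind (π ^ t 0).measurable x, ← hP.map_apply_eq_comp,
    integral_map (measurable_pi_apply _).aemeasurable hmeas.aestronglyMeasurable]
  simp only [hconst]

theorem LipschitzContraction.dist_integral_sampled_le (hπ : LipschitzContraction π C γ)
    (ht : Monotone t) {x y : X} {Q : Measure (ℕ → X)}
    (hP : IsMarkovChainLaw π (Measure.dirac x) P) (hQ : IsMarkovChainLaw π (Measure.dirac y) Q)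
    (hh : CoordLipschitz (n + 1) w h) (hB : ∀ a, |h a| ≤ B) :
    dist (∫ ω, h (ω ∘ t) ∂P) (∫ ω, h (ω ∘ t) ∂Q) ≤
      (∑ j ∈ Finset.range (n + 1), w j * ((C : ℝ) ^ (j + 1) * γ ^ t j)) * dist x y := by
  induction n generalizing w h with
  | zero =>
    rw [integral_sampled_zero hP hh, integral_sampled_zero hQ hh]
    have hlip : LipschitzWith (w 0) fun y : X => h fun _ => y :=
      .of_dist_le_mul fun x y => by simpa using hh (fun _ => x) fun _ => y
    refine ((hπ (t 0) hlip).dist_le_mul x y).trans_eq ?_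
    rw [zero_add, Finset.sum_range_one]
    push_cast
    ring
  | succ n ih =>
    rw [hP.integral_sampled_eq ht hh hB, hQ.integral_sampled_eq ht hh hB]
    have hnext := hh.lipschitz_integrateNext (hπ (t (n + 1) - t n)) hB
    refine (ih hnext (abs_integrateNext_le hB)).trans_eq ?_
    have hγ : (γ : ℝ) ^ t (n + 1) = γ ^ (t (n + 1) - t n) * γ ^ t n := by
      rw [← pow_add, Nat.sub_add_cancel (ht n.le_succ)]
    rw [sum_add_single_mul, Finset.sum_range_succ _ (n + 1), hγ]
    push_cast
    ring

theorem LipschitzContraction.cylinderClose (hπ : LipschitzContraction π C γ) (ht : Monotone t)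
    (hsum : Summable fun j => (C : ℝ) ^ (j + 1) * γ ^ t j) {x y : X} {Q : Measure (ℕ → X)}
    (hP : IsMarkovChainLaw π (Measure.dirac x) P) (hQ : IsMarkovChainLaw π (Measure.dirac y) Q) :
    CylinderClose ((∑' j, (C : ℝ) ^ (j + 1) * γ ^ t j) * dist x y)
      (P.map fun ω => ω ∘ t) (Q.map fun ω => ω ∘ t) := by
  rintro K h ⟨n, hn⟩ ⟨B, hB⟩
  have ht' : Measurable fun ω : ℕ → X => ω ∘ t :=
    measurable_pi_lambda _ fun j => measurable_pi_apply (t j)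
  have hm {R : Measure (ℕ → X)} : AEStronglyMeasurable h R :=
    hn.continuous.measurable.aestronglyMeasurable
  rw [integral_map ht'.aemeasurable hm, integral_map ht'.aemeasurable hm]
  refine (hπ.dist_integral_sampled_le ht hP hQ (hn.mono n.le_succ fun _ => le_rfl) hB).trans ?_
  rw [← Finset.mul_sum, mul_assoc]
  gcongr
  exact hsum.sum_le_tsum _ fun j _ => by positivity

end SampledChain

section MeanSquare

theorem sum_range_add_two_mul (d : ℕ → ℝ) (n : ℕ) :
    ∑ l ∈ Finset.range n, (d (2 * l) + d (2 * l + 1)) = ∑ j ∈ Finset.range (2 * n), d j := by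
  induction n with
  | zero => rfl
  | succ n ih => rw [Finset.sum_range_succ, ih, mul_add_one, Finset.sum_range_succ,
      Finset.sum_range_succ, add_assoc]

variable {X : Type*} [PseudoMetricSpace X] {f : X × X → ℝ} {L : ℝ≥0}

/-- The average of the squares of `f` over the disjoint pairs `(a (2 * l), a (2 * l + 1))` of a
path `a`, with `l` running from `1` to `n` as in the theorem, so that the pair `l = 0` is skipped.
The path `a` is the chain observed only at the times entering the average. -/
noncomputable def meanSq (f : X × X → ℝ) (n : ℕ) (a : ℕ → X) : ℝ :=
  1 / (n : ℝ) * ∑ l ∈ Finset.Icc 1 n, f (a (2 * l), a (2 * l + 1)) ^ 2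

theorem cylinderLipschitz_sqrt_sum_sq (hf : LipschitzWith L f) (n : ℕ) :
    CylinderLipschitz L fun a => √(∑ l ∈ Finset.Icc 1 n, f (a (2 * l), a (2 * l + 1)) ^ 2) := by
  refine ⟨2 * (n + 1), fun a b => (dist_sqrt_sum_sq_le _ _ _).trans ?_⟩
  have hpair (l : ℕ) : dist (f (a (2 * l), a (2 * l + 1))) (f (b (2 * l), b (2 * l + 1))) ≤
      L * dist (a (2 * l)) (b (2 * l)) + L * dist (a (2 * l + 1)) (b (2 * l + 1)) := by
    refine (hf.dist_le_mul _ _).trans ?_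
    rw [← mul_add]
    gcongr
    exact max_le_add_of_nonneg dist_nonneg dist_nonneg
  have hsub : Finset.Icc 1 n ⊆ Finset.range (n + 1) := fun l hl =>
    Finset.mem_range_succ_iff.2 (Finset.mem_Icc.1 hl).2
  calc _ ≤ ∑ l ∈ Finset.range (n + 1), (L * dist (a (2 * l)) (b (2 * l)) +
        L * dist (a (2 * l + 1)) (b (2 * l + 1))) :=
        (Finset.sum_le_sum fun l _ => hpair l).trans
          (Finset.sum_le_sum_of_subset_of_nonneg hsub fun _ _ _ => by positivity)
    _ = _ := sum_range_add_two_mul (fun j => L * dist (a j) (b j)) (n + 1)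

theorem cylinderLipschitz_arctan_meanSq (hf : LipschitzWith L f) (n : ℕ) :
    CylinderLipschitz (2 * (NNReal.sqrt n)⁻¹ * L) (Real.arctan ∘ meanSq f n) := by
  have hscale : LipschitzWith (NNReal.sqrt n)⁻¹ fun r : ℝ => (√n)⁻¹ * r := by
    refine LipschitzWith.of_dist_le_mul fun r r' => ?_
    rw [Real.dist_eq, ← mul_sub, abs_mul, abs_of_nonneg (by positivity), Real.dist_eq]
    simp
  have heq : Real.arctan ∘ meanSq f n = ((fun r => Real.arctan (r ^ 2)) ∘ fun r => (√n)⁻¹ * r) ∘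
      fun a => √(∑ l ∈ Finset.Icc 1 n, f (a (2 * l), a (2 * l + 1)) ^ 2) := by
    funext a
    simp only [Function.comp_apply, meanSq, mul_pow, inv_pow, Real.sq_sqrt n.cast_nonneg,
      Real.sq_sqrt (Finset.sum_nonneg fun _ _ => sq_nonneg _), one_div]
  rw [heq]
  exact (cylinderLipschitz_sqrt_sum_sq hf n).lipschitz_comp (lipschitzWith_arctan_sq.comp hscale)

theorem eventually_cylinderLipschitz_arctan_meanSq (hf : LipschitzWith L f) {ε : ℝ≥0} (hε : 0 < ε) :
    ∀ᶠ n in atTop, CylinderLipschitz ε (Real.arctan ∘ meanSq f n) := by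
  have hsqrt : Tendsto (fun n : ℕ => NNReal.sqrt n) atTop atTop :=
    NNReal.sqrt.tendsto_atTop.comp tendsto_natCast_atTop_atTop
  have hlim : Tendsto (fun n : ℕ => 2 * (NNReal.sqrt n)⁻¹ * L) atTop (𝓝 (2 * 0 * L)) :=
    ((hsqrt.inv_tendsto_atTop).const_mul 2).mul_const L
  rw [mul_zero, zero_mul] at hlim
  filter_upwards [hlim.eventually_le_const hε] with n hn
  exact (cylinderLipschitz_arctan_meanSq hf n).mono hn

end MeanSquare

section SamplingTimes

/-- The times `s, s + 1, s + n₀, s + n₀ + 1, s + 2 * n₀, …` at which the chain is observed. -/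
def samplingTime (s n₀ j : ℕ) : ℕ := s + j / 2 * n₀ + j % 2

variable {s n₀ : ℕ}

theorem samplingTime_two_mul (s n₀ l : ℕ) : samplingTime s n₀ (2 * l) = s + l * n₀ := by
  simp [samplingTime]

theorem samplingTime_two_mul_add_one (s n₀ l : ℕ) :
    samplingTime s n₀ (2 * l + 1) = s + l * n₀ + 1 := by
  simp [samplingTime, Nat.mul_add_div]

theorem monotone_samplingTime (hn₀ : 1 ≤ n₀) : Monotone (samplingTime s n₀) := by
  refine monotone_nat_of_le_succ fun j => ?_
  obtain ⟨l, rfl | rfl⟩ := j.even_or_odd'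
  · rw [samplingTime_two_mul, samplingTime_two_mul_add_one]
    exact Nat.le_succ _
  · rw [samplingTime_two_mul_add_one, show 2 * l + 1 + 1 = 2 * (l + 1) by ring,
      samplingTime_two_mul, add_one_mul]
    omega

theorem summable_pow_mul_pow_samplingTime {C γ : ℝ} (hγ : 0 ≤ γ)
    (hCγ : C ^ 2 * γ ^ n₀ < 1) : Summable fun j => C ^ (j + 1) * γ ^ samplingTime s n₀ j := by
  have hgeom := summable_geometric_of_lt_one (by positivity) hCγ
  refine Summable.even_add_odd ?_ ?_
  · refine (hgeom.mul_left (C * γ ^ s)).congr fun l => ?_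
    rw [samplingTime_two_mul]
    ring
  · refine (hgeom.mul_left (C ^ 2 * γ ^ (s + 1))).congr fun l => ?_
    rw [samplingTime_two_mul_add_one]
    ring

end SamplingTimes

theorem identDistrib_comp_of_map {Ω Ω' Y Y' Z : Type*} [MeasurableSpace Ω] [MeasurableSpace Ω']
    [MeasurableSpace Y] [MeasurableSpace Y'] [MeasurableSpace Z] {P : Measure Ω} {Q : Measure Ω'}
    {T : Ω → Y} {S : Ω' → Y'} {V : Y → Z} {W : Y' → Z} (hT : Measurable T) (hS : Measurable S)
    (h : IdentDistrib V W (P.map T) (Q.map S)) : IdentDistrib (V ∘ T) (W ∘ S) P Q where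
  aemeasurable_fst := h.aemeasurable_fst.comp_measurable hT
  aemeasurable_snd := h.aemeasurable_snd.comp_measurable hS
  map_eq := by
    rw [← AEMeasurable.map_map_of_aemeasurable h.aemeasurable_fst hT.aemeasurable,
      ← AEMeasurable.map_map_of_aemeasurable h.aemeasurable_snd hS.aemeasurable, h.map_eq]

theorem exists_lipschitzWith_integral_of_identDistrib {X Ω Y : Type*} [PseudoMetricSpace X]
    [MeasurableSpace Ω] [MeasurableSpace Y] {P : X → Measure Ω} {V : Ω → Y}
    (hV : ∀ x y, IdentDistrib V V (P x) (P y)) {Φ : Y → ℝ} (hΦ : Measurable Φ) :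
    ∃ K, LipschitzWith K fun x => ∫ ω, Φ (V ω) ∂P x :=
  ⟨0, .of_dist_le_mul fun x y => by simpa using ((hV x y).comp hΦ).integral_eq⟩

section LimitLaw

variable {X : Type*} [MeasurableSpace X] [MetricSpace X] [SecondCountableTopology X] [BorelSpace X]
  {π : Kernel X X} [IsMarkovKernel π] {C γ L : ℝ≥0} {f : X × X → ℝ} {s n₀ : ℕ} {x y : X}
  {P Q : Measure (ℕ → X)}

theorem LipschitzContraction.identDistrib_meanSq_sampled (hπ : LipschitzContraction π C γ)
    (hCγ : C ^ 2 * γ ^ n₀ < 1) (hn₀ : 1 ≤ n₀) (hf : LipschitzWith L f)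
    (hP : IsMarkovChainLaw π (Measure.dirac x) P) (hQ : IsMarkovChainLaw π (Measure.dirac y) Q) :
    let u := fun (ω : ℕ → X) n => meanSq f n (ω ∘ samplingTime s n₀)
    IdentDistrib (fun ω => liminf (u ω) atTop) (fun ω => liminf (u ω) atTop) P Q ∧
      IdentDistrib (fun ω => limsup (u ω) atTop) (fun ω => limsup (u ω) atTop) P Q := by
  have := hP.prob
  have := hQ.prob
  have hT : Measurable fun ω : ℕ → X => ω ∘ samplingTime s n₀ :=
    measurable_pi_lambda _ fun j => measurable_pi_apply (samplingTime s n₀ j)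
  have := Measure.isProbabilityMeasure_map (μ := P) hT.aemeasurable
  have := Measure.isProbabilityMeasure_map (μ := Q) hT.aemeasurable
  have hclose := hπ.cylinderClose (t := samplingTime s n₀) (monotone_samplingTime hn₀)
    (summable_pow_mul_pow_samplingTime γ.2 (mod_cast hCγ)) hP hQ
  have hlip (ε : ℝ≥0) (hε : 0 < ε) := eventually_cylinderLipschitz_arctan_meanSq hf hε
  have hmeas (n : ℕ) : Measurable (Real.arctan ∘ meanSq f n) :=
    (cylinderLipschitz_arctan_meanSq hf n).continuous.measurable
  have hbdd (n : ℕ) (a : ℕ → X) : |(Real.arctan ∘ meanSq f n) a| ≤ Real.pi / 2 :=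
    abs_le.2 ⟨(Real.neg_pi_div_two_lt_arctan _).le, (Real.arctan_lt_pi_div_two _).le⟩
  have htan : Measurable Real.tan :=
    funext Real.tan_eq_sin_div_cos ▸ Real.measurable_sin.div Real.measurable_cos
  have hinf :=
    (identDistrib_comp_of_map hT hT (hclose.identDistrib_liminf hlip hmeas hbdd)).comp htan
  have hsup :=
    (identDistrib_comp_of_map hT hT (hclose.identDistrib_limsup hlip hmeas hbdd)).comp htan
  simp only [Function.comp_def, tan_liminf_arctan, tan_limsup_arctan] at hinf hsup
  exact ⟨hinf, hsup⟩

end LimitLaw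

theorem meanSq_comp_samplingTime {X : Type*} [MeasurableSpace X] (π : Kernel X X) (ψ : X → ℝ)
    (s n₀ n : ℕ) (ω : ℕ → X) :
    meanSq (fun p => chiFun π ψ p.2 - chiFun π ψ p.1 + ψ p.2) n (ω ∘ samplingTime s n₀) =
      1 / (n : ℝ) * ∑ l ∈ Finset.Icc 1 n, ZFun π ψ (s + 1 + l * n₀) ω ^ 2 := by
  simp only [meanSq, ZFun, Function.comp_apply, samplingTime_two_mul, samplingTime_two_mul_add_one,
    add_right_comm s 1, Nat.add_sub_cancel]

theorem LipschitzContraction.exists_lipschitzWith_chiFun {X : Type*} [MeasurableSpace X]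
    [MetricSpace X] [BorelSpace X] {π : Kernel X X} {C γ : ℝ≥0}
    (hπ : LipschitzContraction π C γ) (hγ : γ < 1)
    (hH1 : ∀ ν : Measure X, FiniteFirstMoment ν → FiniteFirstMoment (Pmeas π ν))
    {μ : Measure X} (hμ : FiniteFirstMoment μ) (hinv : Pmeas π μ = μ) {ψ : X → ℝ} {L : ℝ≥0}
    (hψ : LipschitzWith L ψ) (hψ0 : ∫ x, ψ x ∂μ = 0) : ∃ K, LipschitzWith K (chiFun π ψ) := by
  have hψint (k : ℕ) (x : X) : Integrable ψ ((π ^ k) x) := by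
    rw [← Pmeas_iterate_dirac]
    exact ((finiteFirstMoment_dirac x).iterate hH1 k).integrable_of_lipschitz_s13 hψ
  exact ⟨_, hπ.lipschitzWith_chiFun hγ hψ hψint
    (hπ.summable_Pfun_iterate hγ hμ hinv hψ hψint hψ0)⟩

theorem max_one_sq_mul_lt_one {a b : ℝ≥0} (hb : b < 1) (hab : a ^ 2 * b < 1) :
    max 1 a ^ 2 * b < 1 := by
  rcases max_cases 1 a with ⟨h, -⟩ | ⟨h, -⟩ <;> simpa [h]

theorem liminf_limsup_expectations_lipschitz_general
    {X : Type*} [MeasurableSpace X] [MetricSpace X] [SecondCountableTopology X] [BorelSpace X]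
    {π : Kernel X X} [IsMarkovKernel π] {γ c : ℝ} (hγ0 : 0 ≤ γ) (hγ1 : γ < 1) (hc : 0 ≤ c)
    (hH1 : ∀ ν : Measure X, FiniteFirstMoment ν → FiniteFirstMoment (Pmeas π ν))
    (hH2 : ∀ n : ℕ, 1 ≤ n → ∀ ν₁ ν₂ : Measure X, FiniteFirstMoment ν₁ → FiniteFirstMoment ν₂ →
      wassDist ((Pmeas π)^[n] ν₁) ((Pmeas π)^[n] ν₂) ≤ c * γ ^ n * wassDist ν₁ ν₂)
    {μ : Measure X} (hμ : FiniteFirstMoment μ) (hinv : Pmeas π μ = μ)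
    {ψ : X → ℝ} {L : ℝ≥0} (hψ : LipschitzWith L ψ) (hψ0 : ∫ x, ψ x ∂μ = 0)
    {n₀ : ℕ} (hn₀ : 1 ≤ n₀) (hcγ : c ^ 2 * γ ^ n₀ < 1) {i : ℕ} (hi : 1 ≤ i)
    {P : X → Measure (ℕ → X)} (hP : ∀ x, IsMarkovChainLaw π (Measure.dirac x) (P x)) (x y : X) :
    let u := fun (ω : ℕ → X) (n : ℕ) =>
      1 / (n : ℝ) * ∑ l ∈ Finset.Icc 1 n, ZFun π ψ (i + l * n₀) ω ^ 2
    IdentDistrib (fun ω => liminf (u ω) atTop) (fun ω => liminf (u ω) atTop) (P x) (P y) ∧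
      IdentDistrib (fun ω => limsup (u ω) atTop) (fun ω => limsup (u ω) atTop) (P x) (P y) := by
  lift γ to ℝ≥0 using hγ0
  lift c to ℝ≥0 using hc
  have hπ := lipschitzContraction_of_wassDist hH1 hH2
  obtain ⟨K, hχ⟩ := hπ.exists_lipschitzWith_chiFun (mod_cast hγ1) hH1 hμ hinv hψ hψ0
  have hf : LipschitzWith _ fun p : X × X => chiFun π ψ p.2 - chiFun π ψ p.1 + ψ p.2 :=
    ((hχ.comp .prod_snd).sub (hχ.comp .prod_fst)).add (hψ.comp .prod_snd)
  have hCγ : max 1 c ^ 2 * γ ^ n₀ < 1 :=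
    max_one_sq_mul_lt_one (pow_lt_one₀ γ.2 hγ1 (Nat.one_le_iff_ne_zero.1 hn₀)) (mod_cast hcγ)
  obtain ⟨s, rfl⟩ := Nat.exists_eq_add_of_le' hi
  simpa only [meanSq_comp_samplingTime] using
    hπ.identDistrib_meanSq_sampled (s := s) hCγ hn₀ hf (hP x) (hP y)

/-- The functions `x ↦ E_x(|liminf (1/n)∑ Z_{i+l n₀}² - σ²| ∧ 1)` and the `limsup` analogue
are Lipschitz continuous. -/
theorem liminf_limsup_expectations_lipschitz
    {E : Type*} [MeasurableSpace E] [MetricSpace E] [CompleteSpace E]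
    [SecondCountableTopology E] [BorelSpace E]
    (π : Kernel E E) [IsMarkovKernel π] (γ c : ℝ) (hγ : γ ∈ Set.Ioo (0 : ℝ) 1) (hc : 0 < c)
    -- (H0): the Feller property
    (hH0 : ∀ f : E → ℝ, Continuous f → IsBounded (Set.range f) → Continuous (Pfun π f))
    -- (H1): `P` preserves `M_{1,1}`
    (hH1 : ∀ ν : MeasureTheory.Measure E, FiniteFirstMoment ν → FiniteFirstMoment (Pmeas π ν))
    -- (H2): spectral gap in the Wasserstein metric
    (hH2 : ∀ n : ℕ, 1 ≤ n → ∀ ν₁ ν₂ : MeasureTheory.Measure E, FiniteFirstMoment ν₁ →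
      FiniteFirstMoment ν₂ →
      wassDist ((Pmeas π)^[n] ν₁) ((Pmeas π)^[n] ν₂) ≤ c * γ ^ n * wassDist ν₁ ν₂)
    -- the chain: initial distribution `μ ∈ M_{1,1}` and its law `Pμ` on `E^ℕ`
    (μ : MeasureTheory.Measure E) (hμ : FiniteFirstMoment μ)
    (Pμ : MeasureTheory.Measure (ℕ → E)) (hPμ : IsMarkovChainLaw π μ Pμ)
    -- (H3): uniformly bounded moments of order `2 + δ`
    (x₀ : E) (δ : ℝ) (hδ : 0 < δ)
    (hH3int : ∀ n : ℕ, Integrable (fun ω : ℕ → E => dist x₀ (ω n) ^ (2 + δ)) Pμ)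
    (hH3 : ∃ M : ℝ, ∀ n : ℕ, ∫ ω : ℕ → E, dist x₀ (ω n) ^ (2 + δ) ∂Pμ ≤ M)
    -- the unique invariant measure `μ* ∈ M_{1,1}`
    (μstar : MeasureTheory.Measure E) (hμstar : FiniteFirstMoment μstar)
    (hinv : Pmeas π μstar = μstar)
    (huniq : ∀ ν : MeasureTheory.Measure E, IsProbabilityMeasure ν → Pmeas π ν = ν → ν = μstar)
    -- `ψ` is Lipschitz with `⟨ψ, μ*⟩ = 0`
    (ψ : E → ℝ) (Lψ : ℝ≥0) (hψ : LipschitzWith Lψ ψ) (hψ0 : ∫ x, ψ x ∂μstar = 0)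
    -- the law of the stationary chain, used to define `σ² = E_{μ*} Z₁²`
    (Pstar : MeasureTheory.Measure (ℕ → E)) (hPstar : IsMarkovChainLaw π μstar Pstar)
    (n₀ : ℕ) (hn₀ : 2 ≤ n₀) (hγ₀ : c ^ 2 * γ ^ n₀ < 1)
    -- `Ppt x` is the law of the chain started at `x`
    (Ppt : E → MeasureTheory.Measure (ℕ → E))
    (hPpt : ∀ x : E, IsMarkovChainLaw π (Measure.dirac x) (Ppt x)) :
    ∀ i : ℕ, 1 ≤ i → i ≤ n₀ →
      (∃ K : ℝ≥0, LipschitzWith K (fun x : E =>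
        ∫ ω, min |Filter.liminf
            (fun n : ℕ => (1 / (n : ℝ)) * ∑ l ∈ Finset.Icc 1 n, (ZFun π ψ (i + l * n₀) ω) ^ 2)
            atTop - ∫ ω', (ZFun π ψ 1 ω') ^ 2 ∂Pstar| 1 ∂(Ppt x))) ∧
      (∃ K : ℝ≥0, LipschitzWith K (fun x : E =>
        ∫ ω, min |Filter.limsup
            (fun n : ℕ => (1 / (n : ℝ)) * ∑ l ∈ Finset.Icc 1 n, (ZFun π ψ (i + l * n₀) ω) ^ 2)
            atTop - ∫ ω', (ZFun π ψ 1 ω') ^ 2 ∂Pstar| 1 ∂(Ppt x))) := by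
  intro i hi _
  have hlaw := liminf_limsup_expectations_lipschitz_general hγ.1.le hγ.2 hc.le hH1 hH2 hμstar hinv
    hψ hψ0 (Nat.one_le_of_lt hn₀) hγ₀ hi hPpt
  have hΦ (σ₂ : ℝ) : Measurable fun v : ℝ => min |v - σ₂| 1 := by fun_prop
  exact ⟨exists_lipschitzWith_integral_of_identDistrib (fun x y => (hlaw x y).1) (hΦ _),
    exists_lipschitzWith_integral_of_identDistrib (fun x y => (hlaw x y).2) (hΦ _)⟩
end
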